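/- Let N ≥ 3, fix α > 0, and set 2* = 2N/(N-2). Then for every η > 0 there exists δ > 0 such that for every p with 2* - δ < p + 1 < 2*, every minimizer u ∈ 𝒞 of the Rayleigh quotient R_{α,p} (i.e. every u ∈ 𝒞 with R_{α,p}(u) = S_{α,p}) has all maximum points of |u| within distance η of the boundary: if |u(x₀)| = max_{x ∈ B̄} |u(x)| then dist(x₀, ∂B) < η. In particular, there exists δ₀ > 0 such that for 2* - δ₀ < p + 1 < 2*, no minimizer of R_{α,p} over 𝒞 is radially symmetric. -/

import Mathlib

open MeasureTheory Metric Set Filter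

noncomputable section

abbrev E (N : ℕ) := EuclideanSpace ℝ (Fin N)

/-- The Laplacian: sum of pure second partial derivatives. -/
def lap {N : ℕ} (u : E N → ℝ) (x : E N) : ℝ :=
  ∑ i, fderiv ℝ (fun y => fderiv ℝ u y (EuclideanSpace.single i 1)) x (EuclideanSpace.single i 1)
/-- The admissible class 𝒞: C¹ functions on the closed unit ball, vanishing on the
boundary sphere, not identically zero. -/
def memC {N : ℕ} (u : E N → ℝ) : Prop :=
  ContDiffOn ℝ 1 u (closedBall 0 1) ∧
  (∀ x : E N, ‖x‖ = 1 → u x = 0) ∧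
  ∃ x ∈ closedBall (0 : E N) 1, u x ≠ 0

/-- The Rayleigh quotient R_{α,p}. -/
def ray {N : ℕ} (α p : ℝ) (u : E N → ℝ) : ℝ :=
  (∫ x in ball (0 : E N) 1, ‖gradient u x‖ ^ 2) /
    (∫ x in ball (0 : E N) 1, ‖x‖ ^ α * |u x| ^ (p + 1)) ^ (2 / (p + 1))

/-- The ground-state level S_{α,p}. -/
def Sval (N : ℕ) (α p : ℝ) : ℝ := sInf {c | ∃ u : E N → ℝ, memC u ∧ ray α p u = c}

/-- A function is radial if its value depends only on the norm. -/
def radial {N : ℕ} (u : E N → ℝ) : Prop := ∀ x y : E N, ‖x‖ = ‖y‖ → u x = u y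

/-- The radial ground-state level S^rad_{α,p}. -/
def SradVal (N : ℕ) (α p : ℝ) : ℝ :=
  sInf {c | ∃ u : E N → ℝ, memC u ∧ radial u ∧ ray α p u = c}

/-
Normalize a minimizer `u` to have weighted mass `∫ |x|^α |u|^q = 1`, where `q = p + 1`. Its
rescaled copies, shrunk and pushed against the sphere where the weight is close to `1`, compete
with `u`; as `q → 2*` the Dirichlet energy and the mass scale alike, so minimality forces
`∫ |u|^q → 1`. Since the weight is at most `ρ^α < 1` on the ball of radius `ρ < 1`, the mass of
`u` there tends to zero. On the other hand the weak Euler–Lagrange inequality and a mean value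
argument on the natural scale of the equation give `|u|^q` a mass bounded from below around any
maximum point which stays away from the sphere. Finally a radial function of bounded energy is
small near the sphere, by the Cauchy–Schwarz inequality along rays, so a maximum point cannot lie
there.
-/

open scoped Topology Gradient

section RealVariable

theorem hasDerivAt_sq_max_zero (t : ℝ) :
    HasDerivAt (fun s : ℝ ↦ max s 0 ^ 2) (2 * max t 0) t := by
  have away : ∀ y ≠ (0 : ℝ), HasDerivAt (fun s : ℝ ↦ max s 0 ^ 2) (2 * max y 0) y := by
    intro y hy
    rcases hy.lt_or_gt with hneg | hpos
    · rw [max_eq_right hneg.le, mul_zero]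
      refine (hasDerivAt_const y (0 : ℝ)).congr_of_eventuallyEq ?_
      filter_upwards [gt_mem_nhds hneg] with s hs
      simp [max_eq_right hs.le]
    · rw [max_eq_left hpos.le]
      refine HasDerivAt.congr_of_eventuallyEq (f := fun s ↦ s ^ 2) ?_ ?_
      · simpa using hasDerivAt_pow 2 y
      · filter_upwards [lt_mem_nhds hpos] with s hs
        simp [max_eq_left hs.le]
  exact hasDerivAt_of_hasDerivAt_of_ne' away (by fun_prop) (by fun_prop) t

theorem contDiff_sq_max_zero : ContDiff ℝ 1 (fun s : ℝ ↦ max s 0 ^ 2) := by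
  refine contDiff_one_iff_deriv.2 ⟨fun t ↦ (hasDerivAt_sq_max_zero t).differentiableAt, ?_⟩
  rw [funext fun t ↦ (hasDerivAt_sq_max_zero t).deriv]
  fun_prop

theorem rpow_add_mul_sub_le_rpow {a b q : ℝ} (ha : 0 ≤ a) (hb : 0 < b) (hq : 1 ≤ q) :
    b ^ q + q * b ^ (q - 1) * (a - b) ≤ a ^ q := by
  have bernoulli : 1 + q * (a / b - 1) ≤ (1 + (a / b - 1)) ^ q :=
    one_add_mul_self_le_rpow_one_add (by linarith [div_nonneg ha hb.le]) hq
  rw [add_sub_cancel, Real.div_rpow ha hb.le, le_div_iff₀ (by positivity)] at bernoulli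
  calc b ^ q + q * b ^ (q - 1) * (a - b) = (1 + q * (a / b - 1)) * b ^ q := by
        rw [Real.rpow_sub_one hb.ne']
        field_simp
    _ ≤ a ^ q := bernoulli

theorem min_one_rpow_le_rpow {M θ q : ℝ} (hM : 0 < M) (hθ : 0 ≤ θ) (hθq : θ ≤ q) :
    min 1 (M ^ q) ≤ M ^ θ := by
  rcases le_total 1 M with h | h
  · exact (min_le_left _ _).trans (Real.one_le_rpow h hθ)
  · exact (min_le_right _ _).trans (Real.rpow_le_rpow_of_exponent_ge hM h hθq)

/-- The slope of `truncation e`: it vanishes on `[-e, e]`, equals `1` outside `[-2e, 2e]` and is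
linear in between. -/
def truncationSlope (e s : ℝ) : ℝ := min 1 (max 0 (|s| / e - 1))

/-- A `C¹` truncation of the identity that is flat on `[-e, e]`. Composing a function that
vanishes on the sphere with it produces a function supported in the open ball. -/
def truncation (e t : ℝ) : ℝ := ∫ s in 0..t, truncationSlope e s

theorem continuous_truncationSlope (e : ℝ) : Continuous (truncationSlope e) := by
  unfold truncationSlope
  fun_prop

theorem abs_truncationSlope_le_one (e s : ℝ) : |truncationSlope e s| ≤ 1 := by
  have nonneg : 0 ≤ truncationSlope e s := le_min zero_le_one (le_max_left _ _)
  exact (abs_of_nonneg nonneg).trans_le (min_le_left _ _)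

theorem truncationSlope_eq_zero {e s : ℝ} (he : 0 < e) (hs : |s| ≤ e) :
    truncationSlope e s = 0 := by
  have : |s| / e - 1 ≤ 0 := by linarith [(div_le_one he).2 hs]
  simp [truncationSlope, max_eq_left this]

theorem truncationSlope_eq_one {e s : ℝ} (he : 0 < e) (hs : 2 * e ≤ |s|) :
    truncationSlope e s = 1 := by
  have : 2 ≤ |s| / e := (le_div_iff₀ he).2 hs
  exact min_eq_left ((by linarith : (1 : ℝ) ≤ |s| / e - 1).trans (le_max_right _ _))

theorem hasDerivAt_truncation (e t : ℝ) : HasDerivAt (truncation e) (truncationSlope e t) t :=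
  intervalIntegral.integral_hasDerivAt_right
    ((continuous_truncationSlope e).intervalIntegrable _ _)
    ((continuous_truncationSlope e).stronglyMeasurableAtFilter _ _)
    (continuous_truncationSlope e).continuousAt

theorem contDiff_truncation (e : ℝ) : ContDiff ℝ 1 (truncation e) := by
  refine contDiff_one_iff_deriv.2 ⟨fun t ↦ (hasDerivAt_truncation e t).differentiableAt, ?_⟩
  rw [funext fun t ↦ (hasDerivAt_truncation e t).deriv]
  exact continuous_truncationSlope e

theorem abs_truncation_le (e t : ℝ) : |truncation e t| ≤ |t| := by
  simpa [truncation] using intervalIntegral.norm_integral_le_of_norm_le_const (a := 0) (b := t)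
    (f := truncationSlope e) fun s _ ↦ abs_truncationSlope_le_one e s

theorem truncation_eq_zero {e t : ℝ} (he : 0 < e) (ht : |t| ≤ e) : truncation e t = 0 := by
  refine intervalIntegral.integral_zero_ae (Eventually.of_forall fun s hs ↦ ?_)
  refine truncationSlope_eq_zero he (le_trans ?_ ht)
  simpa using abs_sub_left_of_mem_uIcc (uIoc_subset_uIcc hs)

theorem tendsto_truncation (t : ℝ) : Tendsto (fun e ↦ truncation e t) (𝓝[>] 0) (𝓝 t) := by
  have lim : Tendsto (fun e ↦ truncation e t) (𝓝[>] 0) (𝓝 (∫ _ in 0..t, (1 : ℝ))) := by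
    refine intervalIntegral.tendsto_integral_filter_of_dominated_convergence (fun _ ↦ 1)
      (Eventually.of_forall fun e ↦ (continuous_truncationSlope e).aestronglyMeasurable)
      (Eventually.of_forall fun e ↦ Eventually.of_forall fun s _ ↦ abs_truncationSlope_le_one e s)
      intervalIntegrable_const ?_
    filter_upwards [Measure.ae_ne volume 0] with s hs _
    refine tendsto_const_nhds.congr' ?_
    filter_upwards [Ioo_mem_nhdsGT (half_pos (abs_pos.2 hs))] with e he
    exact (truncationSlope_eq_one he.1 (by linarith [he.2])).symm
  simpa using lim

end RealVariable

section Integration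

variable {X : Type*} [MeasurableSpace X] {μ : Measure X}

theorem rpow_mul_integral_le_integral_rpow_mul {f w : X → ℝ} {b q : ℝ} (hb : 0 < b) (hq : 1 ≤ q)
    (hf : ∀ x, 0 ≤ f x) (hw : ∀ᵐ x ∂μ, 0 ≤ w x) (int_w : Integrable w μ)
    (int_fw : Integrable (fun x ↦ f x * w x) μ) (int_fqw : Integrable (fun x ↦ f x ^ q * w x) μ)
    (mean : b * ∫ x, w x ∂μ ≤ ∫ x, f x * w x ∂μ) :
    b ^ q * ∫ x, w x ∂μ ≤ ∫ x, f x ^ q * w x ∂μ := by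
  have slope_nonneg : 0 ≤ q * b ^ (q - 1) := by positivity
  have int_excess : Integrable (fun x ↦ f x * w x - b * w x) μ := int_fw.sub (int_w.const_mul b)
  have tangent : ∫ x, (b ^ q * w x + q * b ^ (q - 1) * (f x * w x - b * w x)) ∂μ
      ≤ ∫ x, f x ^ q * w x ∂μ := by
    refine integral_mono_ae ((int_w.const_mul _).add (int_excess.const_mul _)) int_fqw ?_
    filter_upwards [hw] with x hwx
    linarith [mul_le_mul_of_nonneg_right (rpow_add_mul_sub_le_rpow (hf x) hb hq) hwx]
  rw [integral_add (int_w.const_mul _) (int_excess.const_mul _),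
    integral_const_mul, integral_const_mul, integral_sub int_fw (int_w.const_mul _),
    integral_const_mul] at tangent
  linarith [mul_nonneg slope_nonneg (sub_nonneg.2 mean)]

theorem sq_integral_le_measureReal_mul_integral_sq [IsFiniteMeasure μ] {f : X → ℝ}
    (hf : Integrable f μ) (hf_sq : Integrable (fun x ↦ f x ^ 2) μ) :
    (∫ x, f x ∂μ) ^ 2 ≤ μ.real univ * ∫ x, f x ^ 2 ∂μ := by
  rcases eq_or_ne μ 0 with rfl | hμ
  · simp
  have : NeZero μ := ⟨hμ⟩
  have mass_pos : 0 < μ.real univ := measureReal_univ_pos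
  set m := μ.real univ
  set I := ∫ x, f x ∂μ with hI
  have variance_nonneg : 0 ≤ ∫ x, (m ^ 2 * f x ^ 2 - 2 * m * I * f x + I ^ 2) ∂μ :=
    integral_nonneg fun x ↦ by
      simpa [show m ^ 2 * f x ^ 2 - 2 * m * I * f x + I ^ 2 = (m * f x - I) ^ 2 by ring] using
        sq_nonneg (m * f x - I)
  have int_affine : Integrable (fun x ↦ m ^ 2 * f x ^ 2 - 2 * m * I * f x) μ :=
    (hf_sq.const_mul _).sub (hf.const_mul _)
  rw [integral_add int_affine (integrable_const _),
    integral_sub (hf_sq.const_mul _) (hf.const_mul _), integral_const_mul, integral_const_mul,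
    integral_const, smul_eq_mul, ← hI] at variance_nonneg
  exact sub_nonneg.1 (nonneg_of_mul_nonneg_right (by linarith) mass_pos)

end Integration

section Ball

variable {V : Type*} [NormedAddCommGroup V]

theorem ball_subset_unitBall {x₀ : V} {r : ℝ} (hr : r + ‖x₀‖ ≤ 1) : ball x₀ r ⊆ ball (0 : V) 1 :=
  ball_subset_ball' (by rwa [dist_zero_right])

variable [NormedSpace ℝ V]

theorem infDist_sphere_le [Nontrivial V] {x : V} (hx : ‖x‖ ≤ 1) :
    infDist x (sphere (0 : V) 1) ≤ 1 - ‖x‖ := by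
  rcases eq_or_ne x 0 with rfl | h0
  · obtain ⟨y, hy⟩ := exists_norm_eq V zero_le_one
    simpa [hy] using infDist_le_dist_of_mem (x := (0 : V)) (mem_sphere_zero_iff_norm.2 hy)
  have norm_pos : 0 < ‖x‖ := norm_pos_iff.2 h0
  refine (infDist_le_dist_of_mem (y := ‖x‖⁻¹ • x) ?_).trans_eq ?_
  · simp [norm_smul, norm_pos.ne']
  · have : x - ‖x‖⁻¹ • x = (1 - ‖x‖⁻¹) • x := by rw [sub_smul, one_smul]
    have inv_ge : 1 ≤ ‖x‖⁻¹ := (one_le_inv₀ norm_pos).2 hx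
    rw [dist_eq_norm, this, norm_smul, Real.norm_eq_abs, abs_of_nonpos (by linarith)]
    field_simp
    ring

theorem rescaled_mem_ball {x₀ x : V} {r : ℝ} (hr : 0 < r) :
    r⁻¹ • (x - x₀) ∈ ball (0 : V) 1 ↔ x ∈ ball x₀ r := by
  rw [mem_ball_zero_iff, norm_smul, norm_inv, Real.norm_eq_abs, abs_of_pos hr, mem_ball_iff_norm,
    inv_mul_lt_one₀ hr]

variable [MeasurableSpace V] [BorelSpace V] [FiniteDimensional ℝ V]
  (μ : Measure V) [μ.IsAddHaarMeasure]

theorem setIntegral_ball_eq (f : V → ℝ) (x₀ : V) {r : ℝ} (hr : 0 < r) :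
    ∫ x in ball x₀ r, f x ∂μ
      = r ^ Module.finrank ℝ V * ∫ y in ball (0 : V) 1, f (x₀ + r • y) ∂μ := by
  have translate := (measurePreserving_add_left μ x₀).setIntegral_preimage_emb
    (MeasurableEquiv.addLeft x₀).measurableEmbedding f (ball x₀ r)
  rw [preimage_add_ball, sub_self] at translate
  rw [Measure.setIntegral_comp_smul_of_pos μ (fun z ↦ f (x₀ + z)) _ hr, smul_unitBall hr.ne',
    Real.norm_of_nonneg hr.le, translate, smul_eq_mul, mul_inv_cancel_left₀ (by positivity)]

theorem setIntegral_unitBall_rescaled {g : V → V → ℝ} (hg : ∀ x, ∀ y ∉ ball (0 : V) 1, g x y = 0)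
    {x₀ : V} {r : ℝ} (hr : 0 < r) (hr₁ : r + ‖x₀‖ ≤ 1) :
    ∫ x in ball (0 : V) 1, g x (r⁻¹ • (x - x₀)) ∂μ
      = r ^ Module.finrank ℝ V * ∫ y in ball (0 : V) 1, g (x₀ + r • y) y ∂μ := by
  rw [setIntegral_eq_of_subset_of_forall_sdiff_eq_zero measurableSet_ball
    (ball_subset_unitBall hr₁) fun x hx ↦ hg x _ (mt (rescaled_mem_ball hr).1 hx.2),
    setIntegral_ball_eq μ _ x₀ hr]
  simp [smul_smul, inv_mul_cancel₀ hr.ne']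

end Ball

section BallIntegrability

variable {V F : Type*} [MetricSpace V] [ProperSpace V] [MeasurableSpace V] {x : V} {r : ℝ}

theorem measureReal_ball_pos (μ : Measure V) [IsFiniteMeasureOnCompacts μ] [μ.IsOpenPosMeasure]
    (x : V) (hr : 0 < r) : 0 < μ.real (ball x r) :=
  ENNReal.toReal_pos (measure_ball_pos μ x hr).ne' measure_ball_lt_top.ne

variable [OpensMeasurableSpace V] [NormedAddCommGroup F] {μ : Measure V}
  [IsFiniteMeasureOnCompacts μ] {f : V → F}

theorem integrableOn_ball_of_continuousOn_closedBall (hf : ContinuousOn f (closedBall x r)) :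
    IntegrableOn f (ball x r) μ :=
  (hf.integrableOn_compact (isCompact_closedBall x r)).mono_set ball_subset_closedBall

theorem integrableOn_ball_of_bound (hf : ContinuousOn f (ball x r)) {C : ℝ}
    (hC : ∀ y ∈ ball x r, ‖f y‖ ≤ C) : IntegrableOn f (ball x r) μ :=
  IntegrableOn.of_bound measure_ball_lt_top (hf.aestronglyMeasurable measurableSet_ball) C
    ((ae_restrict_iff' measurableSet_ball).2 (Eventually.of_forall hC))

theorem setIntegral_ball_mono_of_continuousOn {f g : V → ℝ} (hf : ContinuousOn f (closedBall x r))
    (hg : ContinuousOn g (closedBall x r)) (h : ∀ y ∈ ball x r, f y ≤ g y) :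
    ∫ y in ball x r, f y ∂μ ≤ ∫ y in ball x r, g y ∂μ :=
  setIntegral_mono_on (integrableOn_ball_of_continuousOn_closedBall hf)
    (integrableOn_ball_of_continuousOn_closedBall hg) measurableSet_ball h

end BallIntegrability

section Gradient

variable {V : Type*} [NormedAddCommGroup V] [InnerProductSpace ℝ V] [CompleteSpace V]
  {u v : V → ℝ} {x : V}

theorem norm_gradient_eq (u : V → ℝ) (x : V) : ‖∇ u x‖ = ‖fderiv ℝ u x‖ :=
  LinearIsometryEquiv.norm_map _ _

theorem gradient_const_mul_eq (c : ℝ) (hu : DifferentiableAt ℝ u x) :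
    ∇ (fun y ↦ c * u y) x = c • ∇ u x := by
  simp [gradient, fderiv_const_mul hu]

theorem gradient_add_eq (hu : DifferentiableAt ℝ u x) (hv : DifferentiableAt ℝ v x) :
    ∇ (fun y ↦ u y + v y) x = ∇ u x + ∇ v x := by
  simp [gradient, fderiv_fun_add hu hv]

theorem gradient_real_comp {f : ℝ → ℝ} {f' : ℝ} (hf : HasDerivAt f f' (u x))
    (hu : DifferentiableAt ℝ u x) : ∇ (fun y ↦ f (u y)) x = f' • ∇ u x := by
  have chain : HasFDerivAt (fun y ↦ f (u y)) (f' • fderiv ℝ u x) x :=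
    hf.comp_hasFDerivAt x hu.hasFDerivAt
  simp [gradient, chain.fderiv]

end Gradient

section DirichletClass

/-- The class `C¹` functions on the closed unit ball with zero boundary values: the admissible
class `𝒞` of the Rayleigh quotient together with the zero function. -/
structure DirichletC1 {V : Type*} [NormedAddCommGroup V] [NormedSpace ℝ V] (u : V → ℝ) :
    Prop where
  contDiffOn : ContDiffOn ℝ 1 u (closedBall 0 1)
  eq_zero_of_norm_eq_one : ∀ x, ‖x‖ = 1 → u x = 0

namespace DirichletC1

section NormedSpace

variable {V : Type*} [NormedAddCommGroup V] [NormedSpace ℝ V] {u v : V → ℝ}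

theorem continuousOn (hu : DirichletC1 u) : ContinuousOn u (closedBall 0 1) :=
  hu.contDiffOn.continuousOn

theorem differentiableAt (hu : DirichletC1 u) {x : V} (hx : x ∈ ball (0 : V) 1) :
    DifferentiableAt ℝ u x :=
  (hu.contDiffOn.differentiableOn one_ne_zero).differentiableAt
    (mem_of_superset (isOpen_ball.mem_nhds hx) ball_subset_closedBall)

theorem const_mul (hu : DirichletC1 u) (c : ℝ) : DirichletC1 (fun x ↦ c * u x) :=
  ⟨contDiffOn_const.mul hu.contDiffOn, fun x hx ↦ by simp [hu.eq_zero_of_norm_eq_one x hx]⟩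

theorem add (hu : DirichletC1 u) (hv : DirichletC1 v) : DirichletC1 (fun x ↦ u x + v x) :=
  ⟨hu.contDiffOn.add hv.contDiffOn, fun x hx ↦ by
    simp [hu.eq_zero_of_norm_eq_one x hx, hv.eq_zero_of_norm_eq_one x hx]⟩

theorem continuousOn_abs_rpow (hu : DirichletC1 u) {q : ℝ} (hq : 0 ≤ q) :
    ContinuousOn (fun x ↦ |u x| ^ q) (closedBall 0 1) :=
  hu.continuousOn.abs.rpow_const fun _ _ ↦ Or.inr hq

theorem continuousOn_norm_rpow_mul (hu : DirichletC1 u) {α q : ℝ} (hα : 0 ≤ α) (hq : 0 ≤ q) :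
    ContinuousOn (fun x ↦ ‖x‖ ^ α * |u x| ^ q) (closedBall 0 1) :=
  (continuousOn_id.norm.rpow_const fun _ _ ↦ Or.inr hα).mul (hu.continuousOn_abs_rpow hq)

theorem exists_abs_le [ProperSpace V] (hu : DirichletC1 u) :
    ∃ C, ∀ x ∈ closedBall (0 : V) 1, |u x| ≤ C :=
  (isCompact_closedBall (0 : V) 1).exists_bound_of_continuousOn hu.continuousOn

end NormedSpace

section Gradient

variable {V : Type*} [NormedAddCommGroup V] [InnerProductSpace ℝ V] [CompleteSpace V]
  {u : V → ℝ}

theorem continuousOn_gradient (hu : DirichletC1 u) : ContinuousOn (∇ u) (ball (0 : V) 1) :=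
  (InnerProductSpace.toDual ℝ V).symm.continuous.comp_continuousOn
    ((hu.contDiffOn.mono ball_subset_closedBall).continuousOn_fderiv_of_isOpen isOpen_ball le_rfl)

theorem exists_norm_gradient_le [ProperSpace V] (hu : DirichletC1 u) :
    ∃ C, ∀ x ∈ ball (0 : V) 1, ‖∇ u x‖ ≤ C := by
  have unique : UniqueDiffOn ℝ (closedBall (0 : V) 1) :=
    uniqueDiffOn_convex (convex_closedBall _ _) ⟨0, ball_subset_interior_closedBall (by simp)⟩
  obtain ⟨C, hC⟩ := (isCompact_closedBall (0 : V) 1).exists_bound_of_continuousOn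
    (hu.contDiffOn.continuousOn_fderivWithin unique le_rfl)
  refine ⟨C, fun x hx ↦ ?_⟩
  rw [norm_gradient_eq, ← fderivWithin_of_mem_nhds
    (mem_of_superset (isOpen_ball.mem_nhds hx) ball_subset_closedBall)]
  exact hC x (ball_subset_closedBall hx)

variable [ProperSpace V] [MeasurableSpace V] [BorelSpace V] {μ : Measure V}
  [IsFiniteMeasureOnCompacts μ] {v : V → ℝ}

theorem integrableOn_inner_gradient (hu : DirichletC1 u) (hv : DirichletC1 v) :
    IntegrableOn (fun x ↦ inner ℝ (∇ u x) (∇ v x)) (ball (0 : V) 1) μ := by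
  obtain ⟨C, hC⟩ := hu.exists_norm_gradient_le
  obtain ⟨C', hC'⟩ := hv.exists_norm_gradient_le
  refine integrableOn_ball_of_bound (hu.continuousOn_gradient.inner hv.continuousOn_gradient)
    (C := C * C') fun x hx ↦ (norm_inner_le_norm _ _).trans ?_
  exact mul_le_mul (hC x hx) (hC' x hx) (norm_nonneg _) ((norm_nonneg _).trans (hC x hx))

theorem integrableOn_sq_norm_gradient (hu : DirichletC1 u) :
    IntegrableOn (fun x ↦ ‖∇ u x‖ ^ 2) (ball (0 : V) 1) μ := by
  simpa only [real_inner_self_eq_norm_sq] using hu.integrableOn_inner_gradient hu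

end Gradient

end DirichletC1

end DirichletClass

section Functionals

variable {V : Type*} [NormedAddCommGroup V] [InnerProductSpace ℝ V] [FiniteDimensional ℝ V]
  [MeasurableSpace V] [BorelSpace V]

/-- The Dirichlet energy `∫_B |∇u|²`, the numerator of the Rayleigh quotient. -/
def dirichletEnergy (u : V → ℝ) : ℝ := ∫ x in ball (0 : V) 1, ‖∇ u x‖ ^ 2

/-- The weighted mass `∫_B |x|^α |u|^q`. The denominator of the Rayleigh quotient is its power
`2 / q` with `q = p + 1`. -/
def henonMass (α q : ℝ) (u : V → ℝ) : ℝ := ∫ x in ball (0 : V) 1, ‖x‖ ^ α * |u x| ^ q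

/-- Minimizers of the Rayleigh quotient, scaled to have weighted mass one. The minimality
condition is multiplied out, which makes it meaningful (and true) for `w = 0` as well. -/
structure IsNormalizedMinimizer (α q : ℝ) (u : V → ℝ) : Prop where
  dirichletC1 : DirichletC1 u
  henonMass_eq_one : henonMass α q u = 1
  minimal : ∀ w : V → ℝ, DirichletC1 w →
    dirichletEnergy u * henonMass α q w ^ (2 / q) ≤ dirichletEnergy w

variable {u v : V → ℝ} {α q : ℝ}

theorem dirichletEnergy_nonneg (u : V → ℝ) : 0 ≤ dirichletEnergy u :=
  integral_nonneg fun _ ↦ by positivity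

theorem henonMass_nonneg (α q : ℝ) (u : V → ℝ) : 0 ≤ henonMass α q u :=
  integral_nonneg fun _ ↦ by positivity

theorem dirichletEnergy_const_mul (hu : DirichletC1 u) (c : ℝ) :
    dirichletEnergy (fun x ↦ c * u x) = c ^ 2 * dirichletEnergy u := by
  unfold dirichletEnergy
  rw [← integral_const_mul]
  refine setIntegral_congr_fun measurableSet_ball fun x hx ↦ ?_
  simp only [gradient_const_mul_eq c (hu.differentiableAt hx), norm_smul, mul_pow,
    Real.norm_eq_abs, sq_abs]

theorem henonMass_const_mul (α q : ℝ) (u : V → ℝ) (c : ℝ) :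
    henonMass α q (fun x ↦ c * u x) = |c| ^ q * henonMass α q u := by
  unfold henonMass
  rw [← integral_const_mul]
  refine setIntegral_congr_fun measurableSet_ball fun x _ ↦ ?_
  simp only [abs_mul, Real.mul_rpow (abs_nonneg c) (abs_nonneg (u x))]
  ring

theorem dirichletEnergy_add_const_mul (hu : DirichletC1 u) (hv : DirichletC1 v) (t : ℝ) :
    dirichletEnergy (fun x ↦ u x + t * v x) = dirichletEnergy u
      + 2 * t * (∫ x in ball (0 : V) 1, inner ℝ (∇ u x) (∇ v x)) + t ^ 2 * dirichletEnergy v := by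
  unfold dirichletEnergy
  have int_uv := (hu.integrableOn_inner_gradient (μ := volume) hv).const_mul (2 * t)
  have int_vv := (hv.integrableOn_sq_norm_gradient (μ := volume)).const_mul (t ^ 2)
  have int_u_uv : IntegrableOn
      (fun x ↦ ‖∇ u x‖ ^ 2 + 2 * t * inner ℝ (∇ u x) (∇ v x)) (ball (0 : V) 1) :=
    hu.integrableOn_sq_norm_gradient.add int_uv
  rw [← integral_const_mul, ← integral_const_mul,
    ← integral_add hu.integrableOn_sq_norm_gradient int_uv,
    ← integral_add int_u_uv int_vv]
  refine setIntegral_congr_fun measurableSet_ball fun x hx ↦ ?_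
  simp only [gradient_add_eq (hu.differentiableAt hx) ((hv.const_mul t).differentiableAt hx),
    gradient_const_mul_eq t (hv.differentiableAt hx), norm_add_sq_real, inner_smul_right,
    norm_smul, mul_pow, Real.norm_eq_abs, sq_abs]
  ring

theorem henonMass_eq_zero (hq : q ≠ 0) (hu : EqOn u (fun _ ↦ 0) (ball 0 1)) :
    henonMass α q u = 0 := by
  refine setIntegral_eq_zero_of_forall_eq_zero fun x hx ↦ ?_
  rw [hu hx, abs_zero, Real.zero_rpow hq, mul_zero]

theorem henonMass_pos [Nontrivial V] (hα : 0 ≤ α) (hq : 0 < q) (hu : DirichletC1 u)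
    (h : ∃ x ∈ closedBall (0 : V) 1, u x ≠ 0) : 0 < henonMass α q u := by
  refine (henonMass_nonneg α q u).lt_of_ne fun mass_zero ↦ ?_
  have cont := hu.continuousOn_norm_rpow_mul hα hq.le
  have weighted_zero := Measure.eqOn_open_of_ae_eq
    ((setIntegral_eq_zero_iff_of_nonneg_ae (Eventually.of_forall fun x ↦ by positivity)
      (integrableOn_ball_of_continuousOn_closedBall cont)).1 mass_zero.symm)
    isOpen_ball (cont.mono ball_subset_closedBall) continuousOn_const
  have ae_zero : u =ᵐ[volume.restrict (ball 0 1)] fun _ ↦ 0 := by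
    refine (ae_restrict_iff' measurableSet_ball).2 ?_
    filter_upwards [Measure.ae_ne volume 0] with x hx hxb
    simpa [Real.rpow_eq_zero_iff_of_nonneg, hx, hq.ne'] using weighted_zero hxb
  have ball_zero : EqOn u (fun _ ↦ 0) (ball 0 1) := Measure.eqOn_open_of_ae_eq ae_zero
    isOpen_ball (hu.continuousOn.mono ball_subset_closedBall) continuousOn_const
  obtain ⟨x, hx, hux⟩ := h
  refine hux (ball_zero.of_subset_closure hu.continuousOn continuousOn_const
    ball_subset_closedBall ?_ hx)
  rw [closure_ball _ one_ne_zero]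

theorem eqOn_zero_of_dirichletEnergy_eq_zero [Nontrivial V] (hu : DirichletC1 u)
    (h : dirichletEnergy u = 0) : EqOn u (fun _ ↦ 0) (closedBall 0 1) := by
  have cont : ContinuousOn (fun x ↦ ‖∇ u x‖ ^ 2) (ball 0 1) := hu.continuousOn_gradient.norm.pow 2
  have gradient_zero := Measure.eqOn_open_of_ae_eq
    ((setIntegral_eq_zero_iff_of_nonneg_ae (Eventually.of_forall fun x ↦ by positivity)
      hu.integrableOn_sq_norm_gradient).1 h) isOpen_ball cont continuousOn_const
  have fderiv_zero : EqOn (fderiv ℝ u) 0 (ball 0 1) := fun x hx ↦ by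
    have := gradient_zero hx
    simpa [norm_gradient_eq] using this
  have constant : EqOn u (fun _ ↦ u 0) (ball 0 1) := fun x hx ↦
    isOpen_ball.is_const_of_fderiv_eq_zero (convex_ball 0 1).isPreconnected
      (fun y hy ↦ (hu.differentiableAt hy).differentiableWithinAt) fderiv_zero hx
      (mem_ball_self one_pos)
  have constant' : EqOn u (fun _ ↦ u 0) (closedBall 0 1) :=
    constant.of_subset_closure hu.continuousOn continuousOn_const ball_subset_closedBall
      (closure_ball _ one_ne_zero).ge
  obtain ⟨e, he⟩ := exists_norm_eq V zero_le_one
  intro x hx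
  rw [constant' hx, ← constant' (mem_closedBall_zero_iff.2 he.le),
    hu.eq_zero_of_norm_eq_one e he]

namespace IsNormalizedMinimizer

theorem neg (hu : IsNormalizedMinimizer α q u) : IsNormalizedMinimizer α q (fun x ↦ -u x) := by
  have energy := dirichletEnergy_const_mul hu.dirichletC1 (-1)
  have mass := henonMass_const_mul α q u (-1)
  simp only [neg_one_mul, even_two.neg_pow, one_pow, one_mul, abs_neg, abs_one,
    Real.one_rpow] at energy mass
  refine ⟨by simpa using hu.dirichletC1.const_mul (-1), mass.trans hu.henonMass_eq_one, ?_⟩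
  rw [energy]
  exact hu.minimal

theorem dirichletEnergy_pos [Nontrivial V] (hu : IsNormalizedMinimizer α q u) (hq : q ≠ 0) :
    0 < dirichletEnergy u := by
  refine (dirichletEnergy_nonneg u).lt_of_ne fun h ↦ zero_ne_one (α := ℝ) ?_
  rw [← hu.henonMass_eq_one, henonMass_eq_zero hq
    ((eqOn_zero_of_dirichletEnergy_eq_zero hu.dirichletC1 h.symm).mono ball_subset_closedBall)]

end IsNormalizedMinimizer

end Functionals

section EulerLagrange

variable {V : Type*} [NormedAddCommGroup V] {α q : ℝ}

theorem abs_norm_rpow_mul_source_le (hα : 0 ≤ α) (hq : 1 < q) {x : V} (hx : ‖x‖ ≤ 1)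
    {s b A B : ℝ} (hs : |s| ≤ A) (hb : |b| ≤ B) :
    |‖x‖ ^ α * (|s| ^ (q - 2) * s * b)| ≤ A ^ (q - 1) * B := by
  have A_nonneg : 0 ≤ A := (abs_nonneg s).trans hs
  have power_eq : |s| ^ (q - 2) * |s| = |s| ^ (q - 1) := by
    rw [← Real.rpow_add_one' (abs_nonneg s) (by linarith)]
    ring_nf
  have weight_le : ‖x‖ ^ α ≤ 1 := Real.rpow_le_one (norm_nonneg x) hx hα
  have power_le : |s| ^ (q - 1) ≤ A ^ (q - 1) :=
    Real.rpow_le_rpow (abs_nonneg s) hs (by linarith)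
  calc |‖x‖ ^ α * (|s| ^ (q - 2) * s * b)| = ‖x‖ ^ α * (|s| ^ (q - 1) * |b|) := by
        rw [abs_mul, abs_mul, abs_mul, abs_of_nonneg (a := ‖x‖ ^ α) (by positivity),
          abs_of_nonneg (a := |s| ^ (q - 2)) (by positivity), power_eq]
    _ ≤ 1 * (A ^ (q - 1) * B) := by gcongr
    _ = A ^ (q - 1) * B := one_mul _

variable [InnerProductSpace ℝ V] [FiniteDimensional ℝ V] [MeasurableSpace V] [BorelSpace V]
  {u φ : V → ℝ}

theorem DirichletC1.integrableOn_source (hα : 0 ≤ α) (hq : 1 < q) (hu : DirichletC1 u)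
    (hφ : DirichletC1 φ) :
    IntegrableOn (fun x ↦ ‖x‖ ^ α * (|u x| ^ (q - 2) * u x * φ x)) (ball (0 : V) 1) := by
  obtain ⟨A, hA⟩ := hu.exists_abs_le
  obtain ⟨B, hB⟩ := hφ.exists_abs_le
  have meas_u := (hu.continuousOn.mono ball_subset_closedBall).aemeasurable (μ := volume)
    measurableSet_ball
  have meas_φ := (hφ.continuousOn.mono ball_subset_closedBall).aemeasurable (μ := volume)
    measurableSet_ball
  refine IntegrableOn.of_bound measure_ball_lt_top (by fun_prop) (A ^ (q - 1) * B)
    ((ae_restrict_iff' measurableSet_ball).2 (Eventually.of_forall fun x hx ↦ ?_))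
  exact abs_norm_rpow_mul_source_le hα hq (mem_ball_zero_iff.1 hx).le
    (hA x (ball_subset_closedBall hx)) (hB x (ball_subset_closedBall hx))

theorem hasDerivAt_henonMass_add_const_mul (hα : 0 ≤ α) (hq : 1 < q) (hu : DirichletC1 u)
    (hφ : DirichletC1 φ) :
    HasDerivAt (fun t ↦ henonMass α q (fun x ↦ u x + t * φ x))
      (q * ∫ x in ball (0 : V) 1, ‖x‖ ^ α * (|u x| ^ (q - 2) * u x * φ x)) 0 := by
  obtain ⟨A, hA⟩ := hu.exists_abs_le
  obtain ⟨B, hB⟩ := hφ.exists_abs_le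
  let F (t : ℝ) (x : V) : ℝ := ‖x‖ ^ α * |u x + t * φ x| ^ q
  let F' (t : ℝ) (x : V) : ℝ :=
    q * (‖x‖ ^ α * (|u x + t * φ x| ^ (q - 2) * (u x + t * φ x) * φ x))
  have hw (t : ℝ) : DirichletC1 (fun x ↦ u x + t * φ x) := hu.add (hφ.const_mul t)
  have int_F (t : ℝ) : IntegrableOn (F t) (ball (0 : V) 1) :=
    integrableOn_ball_of_continuousOn_closedBall
      ((hw t).continuousOn_norm_rpow_mul hα (by linarith))
  have int_F' : IntegrableOn (F' 0) (ball (0 : V) 1) :=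
    ((hw 0).integrableOn_source hα hq hφ).const_mul q
  have deriv_F : ∀ x : V, ∀ t ∈ ball (0 : ℝ) 1, HasDerivAt (F · x) (F' t x) t := fun x t _ ↦ by
    have line : HasDerivAt (fun t ↦ u x + t * φ x) (φ x) t := by
      simpa using ((hasDerivAt_id t).mul_const (φ x)).const_add (u x)
    refine (((hasDerivAt_abs_rpow _ hq).comp t line).const_mul (‖x‖ ^ α)).congr_deriv ?_
    simp only [F']
    ring
  have bound : ∀ x ∈ ball (0 : V) 1, ∀ t ∈ ball (0 : ℝ) 1,
      ‖F' t x‖ ≤ q * ((A + B) ^ (q - 1) * B) := by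
    intro x hx t ht
    have hφ_le := hB x (ball_subset_closedBall hx)
    have hw_le : |u x + t * φ x| ≤ A + B := by
      refine (abs_add_le _ _).trans (add_le_add (hA x (ball_subset_closedBall hx)) ?_)
      rw [abs_mul]
      exact (mul_le_of_le_one_left (abs_nonneg _) (mem_ball_zero_iff.1 ht).le).trans hφ_le
    rw [norm_mul, Real.norm_of_nonneg (by linarith : 0 ≤ q)]
    exact mul_le_mul_of_nonneg_left (abs_norm_rpow_mul_source_le hα hq
      (mem_ball_zero_iff.1 hx).le hw_le hφ_le) (by linarith)
  have deriv := (hasDerivAt_integral_of_dominated_loc_of_deriv_le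
    (ball_mem_nhds (0 : ℝ) one_pos) (Eventually.of_forall fun t ↦ (int_F t).aestronglyMeasurable)
    (int_F 0) int_F'.aestronglyMeasurable
    ((ae_restrict_iff' measurableSet_ball).2 (Eventually.of_forall bound))
    (integrableOn_const measure_ball_lt_top.ne) (Eventually.of_forall deriv_F)).2
  exact deriv.congr_deriv (by simp only [F', integral_const_mul, zero_mul, add_zero])

namespace IsNormalizedMinimizer

theorem integral_inner_gradient_eq (hu : IsNormalizedMinimizer α q u) (hα : 0 ≤ α) (hq : 1 < q)
    (hφ : DirichletC1 φ) :
    ∫ x in ball (0 : V) 1, inner ℝ (∇ u x) (∇ φ x)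
      = dirichletEnergy u * ∫ x in ball (0 : V) 1, ‖x‖ ^ α * (|u x| ^ (q - 2) * u x * φ x) := by
  set E := dirichletEnergy u with hE
  set I := ∫ x in ball (0 : V) 1, inner ℝ (∇ u x) (∇ φ x) with hI
  have mass_deriv := hasDerivAt_henonMass_add_const_mul hα hq hu.dirichletC1 hφ
  set P := ∫ x in ball (0 : V) 1, ‖x‖ ^ α * (|u x| ^ (q - 2) * u x * φ x)
  let J : ℝ → ℝ := fun t ↦ E + 2 * t * I + t ^ 2 * dirichletEnergy φ
    - E * henonMass α q (fun x ↦ u x + t * φ x) ^ (2 / q)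
  have mass_zero : henonMass α q (fun x ↦ u x + 0 * φ x) = 1 := by
    simpa using hu.henonMass_eq_one
  have J_min : IsLocalMin J 0 := by
    refine Eventually.of_forall fun t ↦ ?_
    have minimal := hu.minimal _ (hu.dirichletC1.add (hφ.const_mul t))
    rw [dirichletEnergy_add_const_mul hu.dirichletC1 hφ, ← hE, ← hI] at minimal
    have J_zero : J 0 = 0 := by simp [J, hu.henonMass_eq_one]
    exact J_zero.trans_le (sub_nonneg.2 minimal)
  have J_deriv : HasDerivAt J (2 * I - E * (q * P * (2 / q))) 0 := by
    have quadratic : HasDerivAt (fun t ↦ E + 2 * t * I + t ^ 2 * dirichletEnergy φ) (2 * I) 0 := by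
      have linear := (((hasDerivAt_id (0 : ℝ)).const_mul 2).mul_const I).const_add E
      refine (linear.add ((hasDerivAt_pow 2 (0 : ℝ)).mul_const _)).congr_deriv ?_
      simp
    have power := mass_deriv.rpow_const (p := 2 / q) (Or.inl (by rw [mass_zero]; exact one_ne_zero))
    rw [mass_zero, Real.one_rpow, mul_one] at power
    exact quadratic.sub (power.const_mul E)
  have stationary := J_min.hasDerivAt_eq_zero J_deriv
  rw [mul_comm q P, mul_assoc, mul_div_cancel₀ _ (by linarith : q ≠ 0)] at stationary
  linarith

end IsNormalizedMinimizer

/-- The differential inequality `-Δ u ≤ K` in the unit ball, tested against nonnegative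
functions of class `DirichletC1`. -/
def WeakNegLaplacianLE (K : ℝ) (u : V → ℝ) : Prop :=
  ∀ φ : V → ℝ, DirichletC1 φ → (∀ x ∈ ball (0 : V) 1, 0 ≤ φ x) →
    ∫ x in ball (0 : V) 1, inner ℝ (∇ u x) (∇ φ x) ≤ K * ∫ x in ball (0 : V) 1, φ x

theorem IsNormalizedMinimizer.weakNegLaplacianLE (hu : IsNormalizedMinimizer α q u) (hα : 0 ≤ α)
    (hq : 1 < q) {M : ℝ} (hM : ∀ x ∈ ball (0 : V) 1, |u x| ≤ M) :
    WeakNegLaplacianLE (dirichletEnergy u * M ^ (q - 1)) u := by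
  intro φ hφ φ_nonneg
  rw [hu.integral_inner_gradient_eq hα hq hφ, mul_assoc, ← integral_const_mul (M ^ (q - 1))]
  refine mul_le_mul_of_nonneg_left ?_ (dirichletEnergy_nonneg u)
  refine setIntegral_mono_on (hu.dirichletC1.integrableOn_source hα hq hφ)
    ((integrableOn_ball_of_continuousOn_closedBall hφ.continuousOn).const_mul _)
    measurableSet_ball fun x hx ↦ (le_abs_self _).trans ?_
  exact abs_norm_rpow_mul_source_le hα hq (mem_ball_zero_iff.1 hx).le (hM x hx)
    (abs_of_nonneg (φ_nonneg x hx)).le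

end EulerLagrange

section Rescale

variable {V : Type*} [NormedAddCommGroup V]

/-- The function `x ↦ v ((x - x₀) / r)`, which carries a function supported in the unit ball to
one supported in the ball of radius `r` about `x₀`. -/
def rescale [NormedSpace ℝ V] (x₀ : V) (r : ℝ) (v : V → ℝ) (x : V) : ℝ := v (r⁻¹ • (x - x₀))

theorem dirichletC1_rescale [NormedSpace ℝ V] {v : V → ℝ} (hv : ContDiff ℝ 1 v)
    (hv₀ : ∀ y ∉ ball (0 : V) 1, v y = 0) {x₀ : V} {r : ℝ} (hr : 0 < r) (hr₁ : r + ‖x₀‖ ≤ 1) :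
    DirichletC1 (rescale x₀ r v) where
  contDiffOn := (hv.comp (contDiff_const.smul (contDiff_id.sub contDiff_const))).contDiffOn
  eq_zero_of_norm_eq_one x hx := hv₀ _ fun hmem ↦ by
    have := ball_subset_unitBall hr₁ ((rescaled_mem_ball hr).1 hmem)
    exact (mem_ball_zero_iff.1 this).ne hx

theorem gradient_rescale [InnerProductSpace ℝ V] [CompleteSpace V] {v : V → ℝ}
    (hv : Differentiable ℝ v) (x₀ : V) (r : ℝ) (x : V) :
    ∇ (rescale x₀ r v) x = r⁻¹ • ∇ v (r⁻¹ • (x - x₀)) := by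
  have inner_map : HasFDerivAt (fun x ↦ r⁻¹ • (x - x₀)) (r⁻¹ • ContinuousLinearMap.id ℝ V) x :=
    ((hasFDerivAt_id x).sub_const x₀).const_smul r⁻¹
  have chain : HasFDerivAt (rescale x₀ r v) (r⁻¹ • fderiv ℝ v (r⁻¹ • (x - x₀))) x := by
    refine ((hv (r⁻¹ • (x - x₀))).hasFDerivAt.comp x inner_map).congr_fderiv ?_
    rw [ContinuousLinearMap.comp_smul, ContinuousLinearMap.comp_id]
  simp [gradient, chain.fderiv]

end Rescale

section MeanValue

section Bump

variable {V : Type*} [NormedAddCommGroup V]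

/-- The bump `(1 - |y|²)₊²`, of class `C¹` and supported in the unit ball. Its gradient is
`-4 (1 - |y|²)₊ y`, so testing with it produces the derivative in `s` of the averages
`weightedMean u x₀ s`. -/
def quarticBump (y : V) : ℝ := max (1 - ‖y‖ ^ 2) 0 ^ 2

theorem quarticBump_eq_zero {y : V} (hy : y ∉ ball (0 : V) 1) : quarticBump y = 0 := by
  have : 1 ≤ ‖y‖ := by simpa using hy
  simp [quarticBump, max_eq_right (by nlinarith : 1 - ‖y‖ ^ 2 ≤ 0)]

theorem one_sub_sq_norm_pos {y : V} (hy : y ∈ ball (0 : V) 1) : 0 < 1 - ‖y‖ ^ 2 := by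
  have := mem_ball_zero_iff.1 hy
  nlinarith [norm_nonneg y]

theorem quarticBump_le {y : V} (hy : y ∈ ball (0 : V) 1) : quarticBump y ≤ 1 - ‖y‖ ^ 2 := by
  have weight_pos := one_sub_sq_norm_pos hy
  rw [quarticBump, max_eq_left weight_pos.le]
  nlinarith [sq_nonneg ‖y‖]

theorem abs_mul_one_sub_sq_norm_le {a A : ℝ} {y : V} (hy : y ∈ ball (0 : V) 1) (ha : |a| ≤ A) :
    |a * (1 - ‖y‖ ^ 2)| ≤ A := by
  rw [abs_mul, abs_of_pos (one_sub_sq_norm_pos hy)]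
  exact (mul_le_of_le_one_right (abs_nonneg a) (by linarith [sq_nonneg ‖y‖])).trans ha

theorem add_smul_mem_unitBall [NormedSpace ℝ V] {x₀ : V} {s : ℝ} (hs : |s| + ‖x₀‖ < 1) {y : V}
    (hy : y ∈ closedBall (0 : V) 1) : x₀ + s • y ∈ ball (0 : V) 1 := by
  rw [mem_closedBall_zero_iff] at hy
  rw [mem_ball_zero_iff]
  have smul_le : ‖s • y‖ ≤ |s| := by
    rw [norm_smul, Real.norm_eq_abs]
    exact mul_le_of_le_one_right (abs_nonneg s) hy
  linarith [norm_add_le x₀ (s • y)]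

variable [InnerProductSpace ℝ V]

theorem contDiff_quarticBump : ContDiff ℝ 1 (quarticBump : V → ℝ) :=
  contDiff_sq_max_zero.comp (contDiff_const.sub (contDiff_norm_sq ℝ))

theorem dirichletC1_rescale_quarticBump {x₀ : V} {s : ℝ} (hs : 0 < s)
    (hs₁ : s + ‖x₀‖ ≤ 1) : DirichletC1 (rescale x₀ s (quarticBump : V → ℝ)) :=
  dirichletC1_rescale contDiff_quarticBump (fun _ ↦ quarticBump_eq_zero) hs hs₁

theorem gradient_quarticBump [CompleteSpace V] (y : V) :
    ∇ quarticBump y = (-4 * max (1 - ‖y‖ ^ 2) 0) • y := by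
  refine HasGradientAt.gradient (hasGradientAt_iff_hasFDerivAt.2 ?_)
  refine ((hasDerivAt_sq_max_zero (1 - ‖y‖ ^ 2)).comp_hasFDerivAt y
    ((hasStrictFDerivAt_norm_sq y).hasFDerivAt.const_sub 1)).congr_fderiv ?_
  ext z
  simp only [smul_apply, neg_apply, innerSL_apply_apply,
    InnerProductSpace.toDual_apply_apply, inner_smul_left, smul_eq_mul, conj_trivial]
  ring

end Bump

variable {V : Type*} [NormedAddCommGroup V] [InnerProductSpace ℝ V] [FiniteDimensional ℝ V]
  [MeasurableSpace V] [BorelSpace V] {u : V → ℝ} {x₀ : V}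

/-- The average of `u` over the ball of radius `s` about `x₀` against the weight `1 - |y|²` in
the rescaled variable `y`, up to the normalising factor `weightedVolume V`. -/
def weightedMean (u : V → ℝ) (x₀ : V) (s : ℝ) : ℝ :=
  ∫ y in ball (0 : V) 1, u (x₀ + s • y) * (1 - ‖y‖ ^ 2)

variable (V) in
/-- The total mass of the weight `1 - |y|²` on the unit ball. -/
def weightedVolume : ℝ := ∫ y in ball (0 : V) 1, (1 - ‖y‖ ^ 2)

variable (V) in
theorem integrableOn_one_sub_sq_norm : IntegrableOn (fun y : V ↦ 1 - ‖y‖ ^ 2) (ball 0 1) :=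
  integrableOn_ball_of_continuousOn_closedBall (by fun_prop)

variable (V) in
theorem weightedVolume_pos : 0 < weightedVolume V := by
  refine (setIntegral_pos_iff_support_of_nonneg_ae ?_ (integrableOn_one_sub_sq_norm V)).2 ?_
  · exact (ae_restrict_iff' measurableSet_ball).2
      (Eventually.of_forall fun y hy ↦ (one_sub_sq_norm_pos hy).le)
  · refine (measure_ball_pos volume (0 : V) one_pos).trans_le (measure_mono fun y hy ↦ ⟨?_, hy⟩)
    exact (one_sub_sq_norm_pos hy).ne'

theorem DirichletC1.hasDerivAt_weightedMean (hu : DirichletC1 u) {s : ℝ} (hs : |s| + ‖x₀‖ < 1) :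
    HasDerivAt (weightedMean u x₀)
      (∫ y in ball (0 : V) 1, inner ℝ (∇ u (x₀ + s • y)) y * (1 - ‖y‖ ^ 2)) s := by
  obtain ⟨C, hC⟩ := hu.exists_norm_gradient_le
  obtain ⟨D, hD⟩ := hu.exists_abs_le
  have admissible : {t : ℝ | |t| + ‖x₀‖ < 1} ∈ 𝓝 s :=
    (isOpen_lt (by fun_prop) continuous_const).mem_nhds hs
  have meas (t : ℝ) (ht : |t| + ‖x₀‖ < 1) : AEStronglyMeasurable
      (fun y ↦ u (x₀ + t • y) * (1 - ‖y‖ ^ 2)) (volume.restrict (ball (0 : V) 1)) := by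
    refine ContinuousOn.aestronglyMeasurable (ContinuousOn.mul ?_ (by fun_prop)) measurableSet_ball
    exact hu.continuousOn.comp (by fun_prop) fun y hy ↦
      ball_subset_closedBall (add_smul_mem_unitBall ht (ball_subset_closedBall hy))
  refine (hasDerivAt_integral_of_dominated_loc_of_deriv_le
    (F' := fun t y ↦ inner ℝ (∇ u (x₀ + t • y)) y * (1 - ‖y‖ ^ 2)) (bound := fun _ ↦ C) admissible
    (eventually_of_mem admissible meas) ?_ ?_ ?_
    (integrableOn_const measure_ball_lt_top.ne) ?_).2
  · exact IntegrableOn.of_bound measure_ball_lt_top (meas s hs) D <|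
      (ae_restrict_iff' measurableSet_ball).2 <| Eventually.of_forall fun y hy ↦
        abs_mul_one_sub_sq_norm_le hy (hD _ (ball_subset_closedBall
          (add_smul_mem_unitBall hs (ball_subset_closedBall hy))))
  · refine ContinuousOn.aestronglyMeasurable (ContinuousOn.mul (ContinuousOn.inner ?_
      continuousOn_id) (by fun_prop)) measurableSet_ball
    exact hu.continuousOn_gradient.comp (by fun_prop) fun y hy ↦
      add_smul_mem_unitBall hs (ball_subset_closedBall hy)
  · refine (ae_restrict_iff' measurableSet_ball).2 (Eventually.of_forall fun y hy t ht ↦ ?_)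
    refine abs_mul_one_sub_sq_norm_le hy ((abs_real_inner_le_norm _ _).trans ?_)
    exact (mul_le_of_le_one_right (norm_nonneg _) (mem_ball_zero_iff.1 hy).le).trans
      (hC _ (add_smul_mem_unitBall ht (ball_subset_closedBall hy)))
  · refine (ae_restrict_iff' measurableSet_ball).2 (Eventually.of_forall fun y hy t ht ↦ ?_)
    have line : HasDerivAt (fun t : ℝ ↦ x₀ + t • y) y t := by
      simpa using ((hasDerivAt_id t).smul_const y).const_add x₀
    have differentiable := hu.differentiableAt
      (add_smul_mem_unitBall ht (ball_subset_closedBall hy))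
    rw [inner_gradient_left]
    exact (differentiable.hasFDerivAt.comp_hasDerivAt t line).mul_const _

theorem integral_inner_gradient_rescale_quarticBump (u : V → ℝ) {s : ℝ} (hs : 0 < s)
    (hs₁ : s + ‖x₀‖ ≤ 1) :
    ∫ x in ball (0 : V) 1, inner ℝ (∇ u x) (∇ (rescale x₀ s quarticBump) x)
      = s ^ Module.finrank ℝ V * (-(4 * s⁻¹) *
        ∫ y in ball (0 : V) 1, inner ℝ (∇ u (x₀ + s • y)) y * (1 - ‖y‖ ^ 2)) := by
  simp only [gradient_rescale (contDiff_quarticBump.differentiable one_ne_zero),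
    gradient_quarticBump]
  rw [setIntegral_unitBall_rescaled volume
    (g := fun x y ↦ inner ℝ (∇ u x) (s⁻¹ • (-4 * max (1 - ‖y‖ ^ 2) 0) • y)) ?_ hs hs₁,
    ← integral_const_mul (-(4 * s⁻¹))]
  · refine congrArg _ (setIntegral_congr_fun measurableSet_ball fun y hy ↦ ?_)
    simp only [inner_smul_right, max_eq_left (one_sub_sq_norm_pos hy).le]
    ring
  · intro x y hy
    have : 1 ≤ ‖y‖ := by simpa using hy
    simp [max_eq_right (by nlinarith : 1 - ‖y‖ ^ 2 ≤ 0)]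

theorem integral_rescale_quarticBump_le {s : ℝ} (hs : 0 < s) (hs₁ : s + ‖x₀‖ ≤ 1) :
    ∫ x in ball (0 : V) 1, rescale x₀ s quarticBump x
      ≤ s ^ Module.finrank ℝ V * weightedVolume V := by
  unfold rescale
  rw [setIntegral_unitBall_rescaled volume (g := fun _ ↦ quarticBump)
    (fun _ _ ↦ quarticBump_eq_zero) hs hs₁]
  exact mul_le_mul_of_nonneg_left (setIntegral_ball_mono_of_continuousOn
    contDiff_quarticBump.continuous.continuousOn (by fun_prop) fun y ↦ quarticBump_le)
    (by positivity)

namespace WeakNegLaplacianLE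

theorem le_deriv_weightedMean {K : ℝ} (hu : WeakNegLaplacianLE K u) (hK : 0 ≤ K) {s : ℝ}
    (hs : 0 < s) (hs₁ : s + ‖x₀‖ ≤ 1) :
    -(s / 4 * (K * weightedVolume V))
      ≤ ∫ y in ball (0 : V) 1, inner ℝ (∇ u (x₀ + s • y)) y * (1 - ‖y‖ ^ 2) := by
  have tested := hu _ (dirichletC1_rescale_quarticBump hs hs₁) fun _ _ ↦ sq_nonneg _
  rw [integral_inner_gradient_rescale_quarticBump u hs hs₁] at tested
  set I := ∫ y in ball (0 : V) 1, inner ℝ (∇ u (x₀ + s • y)) y * (1 - ‖y‖ ^ 2)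
  have bound : -(4 * s⁻¹) * I ≤ K * weightedVolume V :=
    le_of_mul_le_mul_left (tested.trans ((mul_le_mul_of_nonneg_left
      (integral_rescale_quarticBump_le hs hs₁) hK).trans_eq (mul_left_comm _ _ _)))
      (by positivity)
  have := mul_le_mul_of_nonneg_left bound (by positivity : 0 ≤ s / 4)
  field_simp at this ⊢
  linarith

theorem sub_mul_weightedVolume_le_weightedMean {K : ℝ} (hu : WeakNegLaplacianLE K u)
    (hu' : DirichletC1 u) (hK : 0 ≤ K) {r : ℝ} (hr : 0 ≤ r) (hr₁ : r + ‖x₀‖ < 1) :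
    (u x₀ - r ^ 2 / 8 * K) * weightedVolume V ≤ weightedMean u x₀ r := by
  set c := weightedVolume V with hc
  have deriv (s : ℝ) (hs : s ∈ Icc 0 r) : HasDerivAt
      (fun s ↦ weightedMean u x₀ s + s ^ 2 / 8 * (K * c))
      ((∫ y in ball (0 : V) 1, inner ℝ (∇ u (x₀ + s • y)) y * (1 - ‖y‖ ^ 2)) + s / 4 * (K * c))
      s := by
    refine (hu'.hasDerivAt_weightedMean ?_).add
      ((((hasDerivAt_pow 2 s).div_const 8).mul_const (K * c)).congr_deriv (by push_cast; ring))
    rw [abs_of_nonneg hs.1]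
    linarith [hs.2]
  have mono : MonotoneOn (fun s ↦ weightedMean u x₀ s + s ^ 2 / 8 * (K * c)) (Icc 0 r) := by
    refine monotoneOn_of_hasDerivWithinAt_nonneg (convex_Icc 0 r)
      (fun s hs ↦ (deriv s hs).continuousAt.continuousWithinAt)
      (fun s hs ↦ (deriv s (interior_subset hs)).hasDerivWithinAt) fun s hs ↦ ?_
    rw [interior_Icc] at hs
    linarith [hu.le_deriv_weightedMean (x₀ := x₀) hK hs.1 (by linarith [hs.2])]
  have mean_zero : weightedMean u x₀ 0 = u x₀ * c := by
    simp [weightedMean, hc, weightedVolume, integral_const_mul]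
  have compare := mono (left_mem_Icc.2 hr) (right_mem_Icc.2 hr) hr
  simp only [mean_zero] at compare
  linarith

theorem weightedVolume_mul_rpow_le {K q : ℝ} (hu : WeakNegLaplacianLE K u) (hu' : DirichletC1 u)
    (hK : 0 ≤ K) (hq : 1 ≤ q) {r : ℝ} (hr : 0 < r) (hr₁ : r + ‖x₀‖ < 1) (hx₀ : 0 < u x₀)
    (hrK : r ^ 2 * K ≤ 4 * u x₀) :
    weightedVolume V * (u x₀ / 2) ^ q * r ^ Module.finrank ℝ V ≤ ∫ x in ball x₀ r, |u x| ^ q := by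
  have cont : ContinuousOn (fun y : V ↦ u (x₀ + r • y)) (closedBall 0 1) :=
    hu'.continuousOn.comp (by fun_prop) fun y hy ↦ ball_subset_closedBall
      (add_smul_mem_unitBall (by rwa [abs_of_pos hr]) hy)
  have cont_rpow : ContinuousOn (fun y : V ↦ |u (x₀ + r • y)| ^ q) (closedBall 0 1) :=
    cont.abs.rpow_const fun _ _ ↦ Or.inr (by linarith)
  have weight_cont : ContinuousOn (fun y : V ↦ 1 - ‖y‖ ^ 2) (closedBall 0 1) := by fun_prop
  have mean : u x₀ / 2 * weightedVolume V
      ≤ ∫ y in ball (0 : V) 1, |u (x₀ + r • y)| * (1 - ‖y‖ ^ 2) := calc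
    u x₀ / 2 * weightedVolume V ≤ (u x₀ - r ^ 2 / 8 * K) * weightedVolume V :=
      mul_le_mul_of_nonneg_right (by linarith) (weightedVolume_pos V).le
    _ ≤ weightedMean u x₀ r := hu.sub_mul_weightedVolume_le_weightedMean hu' hK hr.le hr₁
    _ ≤ _ := setIntegral_ball_mono_of_continuousOn (cont.mul weight_cont)
      (cont.abs.mul weight_cont) fun y hy ↦
        mul_le_mul_of_nonneg_right (le_abs_self _) (one_sub_sq_norm_pos hy).le
  have jensen := rpow_mul_integral_le_integral_rpow_mul (half_pos hx₀) hq
    (fun y ↦ abs_nonneg (u (x₀ + r • y))) ((ae_restrict_iff' measurableSet_ball).2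
      (Eventually.of_forall fun y hy ↦ (one_sub_sq_norm_pos hy).le))
    (integrableOn_one_sub_sq_norm V)
    (integrableOn_ball_of_continuousOn_closedBall (cont.abs.mul weight_cont))
    (integrableOn_ball_of_continuousOn_closedBall (cont_rpow.mul weight_cont)) mean
  have drop_weight : ∫ y in ball (0 : V) 1, |u (x₀ + r • y)| ^ q * (1 - ‖y‖ ^ 2)
      ≤ ∫ y in ball (0 : V) 1, |u (x₀ + r • y)| ^ q :=
    setIntegral_ball_mono_of_continuousOn (cont_rpow.mul weight_cont) cont_rpow
      fun y _ ↦ mul_le_of_le_one_right (by positivity) (by linarith [sq_nonneg ‖y‖])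
  rw [setIntegral_ball_eq volume _ x₀ hr, mul_comm (r ^ _), mul_comm (weightedVolume V)]
  exact mul_le_mul_of_nonneg_right (jensen.trans drop_weight) (by positivity)

end WeakNegLaplacianLE

end MeanValue

section MassNearMaximum

theorem sq_min_one_mul_rpow_le {M q : ℝ} (hM : 0 < M) :
    min 1 (M ^ (-(q - 2) / 2)) ^ 2 * M ^ (q - 1) ≤ M := by
  have sq_le : min 1 (M ^ (-(q - 2) / 2)) ^ 2 ≤ M ^ (-(q - 2)) := calc
    min 1 (M ^ (-(q - 2) / 2)) ^ 2 ≤ (M ^ (-(q - 2) / 2)) ^ 2 := by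
      gcongr
      exact min_le_right _ _
    _ = M ^ (-(q - 2)) := by
      rw [← Real.rpow_mul_natCast hM.le, Nat.cast_ofNat, div_mul_cancel₀ _ two_ne_zero]
  calc min 1 (M ^ (-(q - 2) / 2)) ^ 2 * M ^ (q - 1) ≤ M ^ (-(q - 2)) * M ^ (q - 1) := by gcongr
    _ = M := by
      rw [← Real.rpow_add hM]
      ring_nf
      exact Real.rpow_one M

theorem min_one_rpow_le_rpow_mul_min_pow {M q : ℝ} {n : ℕ} (hM : 0 < M) (hq : 2 ≤ q)
    (hqn : n * (q - 2) ≤ 2 * q) :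
    min 1 (M ^ q) ≤ M ^ q * min 1 (M ^ (-(q - 2) / 2)) ^ n := by
  rcases min_choice 1 (M ^ (-(q - 2) / 2)) with h | h
  · rw [h, one_pow, mul_one]
    exact min_le_right _ _
  · rw [h, ← Real.rpow_mul_natCast hM.le, ← Real.rpow_add hM]
    exact min_one_rpow_le_rpow hM (by linarith) (by nlinarith [n.cast_nonneg (α := ℝ)])

variable {V : Type*} [NormedAddCommGroup V] [InnerProductSpace ℝ V] [FiniteDimensional ℝ V]
  [MeasurableSpace V] [BorelSpace V] {u : V → ℝ} {x₀ : V} {α q : ℝ}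

namespace IsNormalizedMinimizer

theorem one_le_integral_abs_rpow (hu : IsNormalizedMinimizer α q u) (hα : 0 ≤ α) (hq : 0 ≤ q) :
    1 ≤ ∫ x in ball (0 : V) 1, |u x| ^ q := by
  refine hu.henonMass_eq_one.symm.trans_le ?_
  refine setIntegral_ball_mono_of_continuousOn (hu.dirichletC1.continuousOn_norm_rpow_mul hα hq)
    (hu.dirichletC1.continuousOn_abs_rpow hq) fun x hx ↦ ?_
  exact mul_le_of_le_one_left (by positivity)
    (Real.rpow_le_one (norm_nonneg x) (mem_ball_zero_iff.1 hx).le hα)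

theorem one_le_volume_mul_rpow (hu : IsNormalizedMinimizer α q u) (hα : 0 ≤ α) (hq : 0 ≤ q)
    {M : ℝ} (hM : ∀ x ∈ ball (0 : V) 1, |u x| ≤ M) : 1 ≤ volume.real (ball (0 : V) 1) * M ^ q := by
  refine (hu.one_le_integral_abs_rpow hα hq).trans ?_
  rw [← smul_eq_mul, ← setIntegral_const]
  exact setIntegral_ball_mono_of_continuousOn (hu.dirichletC1.continuousOn_abs_rpow hq)
    continuousOn_const fun x hx ↦ Real.rpow_le_rpow (abs_nonneg _) (hM x hx) hq

theorem mul_pow_le_integral_ball_of_pos (hu : IsNormalizedMinimizer α q u) (hα : 0 ≤ α)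
    (hq : 2 ≤ q) (hqn : Module.finrank ℝ V * (q - 2) ≤ 2 * q) {β : ℝ} (hβ : 0 < β)
    (hβu : β ^ 2 * dirichletEnergy u ≤ 4) (hβx₀ : β + ‖x₀‖ < 1) (hx₀ : 0 < u x₀)
    (hmax : ∀ x ∈ ball (0 : V) 1, |u x| ≤ u x₀) :
    weightedVolume V / 2 ^ q * min 1 (volume.real (ball (0 : V) 1))⁻¹ * β ^ Module.finrank ℝ V
      ≤ ∫ x in ball x₀ β, |u x| ^ q := by
  set M := u x₀
  set ω := volume.real (ball (0 : V) 1)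
  set m := min 1 (M ^ (-(q - 2) / 2))
  have m_pos : 0 < m := lt_min one_pos (by positivity)
  have radius_le : β * m ≤ β := mul_le_of_le_one_right hβ.le (min_le_left _ _)
  have source_le : (β * m) ^ 2 * (dirichletEnergy u * M ^ (q - 1)) ≤ 4 * M := calc
    (β * m) ^ 2 * (dirichletEnergy u * M ^ (q - 1))
      = β ^ 2 * dirichletEnergy u * (m ^ 2 * M ^ (q - 1)) := by ring
    _ ≤ 4 * M := by
      gcongr
      exact sq_min_one_mul_rpow_le hx₀
  have mass_le : weightedVolume V * (M / 2) ^ q * (β * m) ^ Module.finrank ℝ V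
      ≤ ∫ x in ball x₀ (β * m), |u x| ^ q :=
    (hu.weakNegLaplacianLE hα (by linarith) hmax).weightedVolume_mul_rpow_le hu.dirichletC1
      (mul_nonneg (dirichletEnergy_nonneg u) (by positivity)) (by linarith) (mul_pos hβ m_pos)
      (by linarith) hx₀ source_le
  have inv_le : ω⁻¹ ≤ M ^ q :=
    inv_le_of_inv_le₀ (by positivity) (by
      rw [inv_le_iff_one_le_mul₀ (by positivity)]
      exact hu.one_le_volume_mul_rpow hα (by linarith) hmax)
  have power_le : min 1 ω⁻¹ ≤ M ^ q * m ^ Module.finrank ℝ V :=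
    (min_le_min_left 1 inv_le).trans (min_one_rpow_le_rpow_mul_min_pow hx₀ hq hqn)
  have c_pos := weightedVolume_pos V
  calc weightedVolume V / 2 ^ q * min 1 ω⁻¹ * β ^ Module.finrank ℝ V
      ≤ weightedVolume V / 2 ^ q * (M ^ q * m ^ Module.finrank ℝ V) * β ^ Module.finrank ℝ V := by
        gcongr
    _ = weightedVolume V * (M / 2) ^ q * (β * m) ^ Module.finrank ℝ V := by
        rw [Real.div_rpow hx₀.le zero_le_two, mul_pow]
        ring
    _ ≤ ∫ x in ball x₀ (β * m), |u x| ^ q := mass_le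
    _ ≤ ∫ x in ball x₀ β, |u x| ^ q := by
        refine setIntegral_mono_set ?_ (Eventually.of_forall fun _ ↦ by positivity)
          (ball_subset_ball radius_le).eventuallyLE
        exact (integrableOn_ball_of_continuousOn_closedBall
          (hu.dirichletC1.continuousOn_abs_rpow (by linarith))).mono_set
          (ball_subset_unitBall hβx₀.le)

theorem mul_pow_le_integral_ball (hu : IsNormalizedMinimizer α q u) (hα : 0 ≤ α)
    (hq : 2 ≤ q) (hqn : Module.finrank ℝ V * (q - 2) ≤ 2 * q) {β : ℝ} (hβ : 0 < β)
    (hβu : β ^ 2 * dirichletEnergy u ≤ 4) (hβx₀ : β + ‖x₀‖ < 1)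
    (hmax : ∀ x ∈ ball (0 : V) 1, |u x| ≤ |u x₀|) :
    weightedVolume V / 2 ^ q * min 1 (volume.real (ball (0 : V) 1))⁻¹ * β ^ Module.finrank ℝ V
      ≤ ∫ x in ball x₀ β, |u x| ^ q := by
  have max_ne_zero : u x₀ ≠ 0 := fun h ↦ by
    have := hu.one_le_volume_mul_rpow hα (by linarith) hmax
    rw [h, abs_zero, Real.zero_rpow (by linarith)] at this
    linarith
  rcases max_ne_zero.lt_or_gt with hneg | hpos
  · rw [abs_of_neg hneg] at hmax
    have energy_neg : dirichletEnergy (fun x ↦ -u x) = dirichletEnergy u := by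
      simpa using dirichletEnergy_const_mul hu.dirichletC1 (-1)
    simpa only [abs_neg] using hu.neg.mul_pow_le_integral_ball_of_pos hα hq hqn hβ
      (energy_neg ▸ hβu) hβx₀ (neg_pos.2 hneg) (by simpa only [abs_neg] using hmax)
  · rw [abs_of_pos hpos] at hmax
    exact hu.mul_pow_le_integral_ball_of_pos hα hq hqn hβ hβu hβx₀ hpos hmax

end IsNormalizedMinimizer

end MassNearMaximum

section BoundaryCompetitor

section TruncatedExtension

variable {V : Type*} [NormedAddCommGroup V] {u : V → ℝ}

/-- The truncation of `u` in the unit ball, extended by zero. When `u` vanishes on the sphere it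
is supported in the open ball, so that its rescaled copies are admissible competitors. -/
def truncatedExtension (e : ℝ) (u : V → ℝ) : V → ℝ :=
  indicator (ball 0 1) fun x ↦ truncation e (u x)

theorem tsupport_truncatedExtension_subset [NormedSpace ℝ V] (hu : DirichletC1 u) {e : ℝ}
    (he : 0 < e) : tsupport (truncatedExtension e u) ⊆ ball 0 1 := by
  have closed : IsClosed (closedBall (0 : V) 1 ∩ (fun x ↦ |u x|) ⁻¹' Ici e) :=
    hu.continuousOn.abs.preimage_isClosed_of_isClosed isClosed_closedBall isClosed_Ici
  have support_subset : Function.support (truncatedExtension e u)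
      ⊆ closedBall (0 : V) 1 ∩ (fun x ↦ |u x|) ⁻¹' Ici e := fun x hx ↦ by
    have mem : x ∈ ball (0 : V) 1 := mem_of_indicator_ne_zero hx
    refine ⟨ball_subset_closedBall mem, ?_⟩
    contrapose! hx
    rw [Function.notMem_support, truncatedExtension, indicator_of_mem mem]
    exact truncation_eq_zero he (not_le.1 hx).le
  refine (closure_minimal support_subset closed).trans fun x ⟨hx, hux⟩ ↦ ?_
  refine mem_ball_zero_iff.2 ((mem_closedBall_zero_iff.1 hx).lt_of_ne fun hx₁ ↦ ?_)
  rw [mem_preimage, hu.eq_zero_of_norm_eq_one x hx₁, abs_zero, mem_Ici] at hux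
  exact hux.not_gt he

theorem truncatedExtension_eventuallyEq (e : ℝ) (u : V → ℝ) {x : V} (hx : x ∈ ball (0 : V) 1) :
    truncatedExtension e u =ᶠ[𝓝 x] fun y ↦ truncation e (u y) := by
  filter_upwards [isOpen_ball.mem_nhds hx] with y hy
  exact indicator_of_mem hy _

theorem contDiff_truncatedExtension [NormedSpace ℝ V] (hu : DirichletC1 u) {e : ℝ} (he : 0 < e) :
    ContDiff ℝ 1 (truncatedExtension e u) := by
  refine contDiff_iff_contDiffAt.2 fun x ↦ ?_
  by_cases hx : x ∈ tsupport (truncatedExtension e u)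
  · have mem := tsupport_truncatedExtension_subset hu he hx
    refine ContDiffAt.congr_of_eventuallyEq ?_ (truncatedExtension_eventuallyEq e u mem)
    exact (contDiff_truncation e).contDiffAt.comp x (hu.contDiffOn.contDiffAt
      (mem_of_superset (isOpen_ball.mem_nhds mem) ball_subset_closedBall))
  · exact contDiffAt_const.congr_of_eventuallyEq (notMem_tsupport_iff_eventuallyEq.1 hx)

theorem norm_gradient_truncatedExtension_le [InnerProductSpace ℝ V] [CompleteSpace V]
    (hu : DirichletC1 u) (e : ℝ) {x : V} (hx : x ∈ ball (0 : V) 1) :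
    ‖∇ (truncatedExtension e u) x‖ ≤ ‖∇ u x‖ := by
  rw [(truncatedExtension_eventuallyEq e u hx).gradient_eq,
    gradient_real_comp (hasDerivAt_truncation e (u x)) (hu.differentiableAt hx), norm_smul]
  exact mul_le_of_le_one_left (norm_nonneg _) (abs_truncationSlope_le_one e (u x))

end TruncatedExtension

variable {V : Type*} [NormedAddCommGroup V] [InnerProductSpace ℝ V] [FiniteDimensional ℝ V]
  [MeasurableSpace V] [BorelSpace V] {u v : V → ℝ} {x₀ : V} {α q r : ℝ}

theorem dirichletEnergy_truncatedExtension_le (hu : DirichletC1 u) {e : ℝ} (he : 0 < e) :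
    dirichletEnergy (truncatedExtension e u) ≤ dirichletEnergy u := by
  have admissible : DirichletC1 (truncatedExtension e u) :=
    ⟨(contDiff_truncatedExtension hu he).contDiffOn, fun x hx ↦ indicator_of_notMem
      (fun hmem ↦ (mem_ball_zero_iff.1 hmem).ne hx) _⟩
  exact setIntegral_mono_on admissible.integrableOn_sq_norm_gradient
    hu.integrableOn_sq_norm_gradient measurableSet_ball fun x hx ↦
      pow_le_pow_left₀ (norm_nonneg _) (norm_gradient_truncatedExtension_le hu e hx) 2

theorem tendsto_integral_truncatedExtension (hu : DirichletC1 u) (hq : 0 ≤ q) :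
    Tendsto (fun e ↦ ∫ x in ball (0 : V) 1, |truncatedExtension e u x| ^ q) (𝓝[>] 0)
      (𝓝 (∫ x in ball (0 : V) 1, |u x| ^ q)) := by
  refine tendsto_integral_filter_of_dominated_convergence (fun x ↦ |u x| ^ q) ?_ ?_
    (integrableOn_ball_of_continuousOn_closedBall (hu.continuousOn_abs_rpow hq)) ?_
  · filter_upwards [self_mem_nhdsWithin] with e he
    exact ((contDiff_truncatedExtension hu he).continuous.abs.rpow_const
      fun _ ↦ Or.inr hq).aestronglyMeasurable
  · refine Eventually.of_forall fun e ↦ (ae_restrict_iff' measurableSet_ball).2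
      (Eventually.of_forall fun x hx ↦ ?_)
    rw [truncatedExtension, indicator_of_mem hx, Real.norm_of_nonneg (by positivity)]
    exact Real.rpow_le_rpow (abs_nonneg _) (abs_truncation_le e (u x)) hq
  · refine (ae_restrict_iff' measurableSet_ball).2 (Eventually.of_forall fun x hx ↦ ?_)
    simp only [truncatedExtension, indicator_of_mem hx]
    exact (tendsto_truncation (u x)).abs.rpow_const (Or.inr hq)

theorem dirichletEnergy_rescale (hv : Differentiable ℝ v) (hv_supp : tsupport v ⊆ ball 0 1)
    (hr : 0 < r) (hr₁ : r + ‖x₀‖ ≤ 1) :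
    dirichletEnergy (rescale x₀ r v)
      = r ^ (Module.finrank ℝ V - 2 : ℝ) * dirichletEnergy v := by
  unfold dirichletEnergy
  simp only [gradient_rescale hv, norm_smul, mul_pow]
  rw [setIntegral_unitBall_rescaled volume (g := fun _ y ↦ ‖r⁻¹‖ ^ 2 * ‖∇ v y‖ ^ 2) ?_ hr hr₁,
    integral_const_mul, Real.rpow_sub hr, Real.rpow_natCast, Real.rpow_ofNat, norm_inv,
    Real.norm_of_nonneg hr.le]
  · ring
  · intro _ y hy
    have : fderiv ℝ v y = 0 := Function.notMem_support.1 fun h ↦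
      hy (hv_supp (support_fderiv_subset ℝ h))
    simp [norm_gradient_eq, this]

theorem mul_integral_le_henonMass_rescale (hα : 0 ≤ α) (hq : 0 < q) (hv : Continuous v)
    (hv₀ : ∀ y ∉ ball (0 : V) 1, v y = 0) (hr : 0 < r) (hr₁ : r + ‖x₀‖ ≤ 1) (hrx₀ : r ≤ ‖x₀‖) :
    (‖x₀‖ - r) ^ α * r ^ Module.finrank ℝ V * ∫ y in ball (0 : V) 1, |v y| ^ q
      ≤ henonMass α q (rescale x₀ r v) := by
  have norm_ge {y : V} (hy : y ∈ ball (0 : V) 1) : ‖x₀‖ - r ≤ ‖x₀ + r • y‖ := by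
    have smul_le : ‖r • y‖ ≤ r := by
      rw [norm_smul, Real.norm_of_nonneg hr.le]
      exact mul_le_of_le_one_right hr.le (mem_ball_zero_iff.1 hy).le
    linarith [norm_sub_le_norm_add x₀ (r • y)]
  have cont_rpow : Continuous fun y ↦ |v y| ^ q :=
    hv.abs.rpow_const fun _ ↦ Or.inr hq.le
  have cont_weight : Continuous fun y ↦ ‖x₀ + r • y‖ ^ α :=
    Continuous.rpow_const (by fun_prop) fun _ ↦ Or.inr hα
  unfold henonMass rescale
  rw [setIntegral_unitBall_rescaled volume (g := fun x y ↦ ‖x‖ ^ α * |v y| ^ q) ?_ hr hr₁,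
    mul_comm (_ ^ α), mul_assoc, ← integral_const_mul]
  · refine mul_le_mul_of_nonneg_left (setIntegral_ball_mono_of_continuousOn
      (continuousOn_const.mul cont_rpow.continuousOn)
      (cont_weight.mul cont_rpow).continuousOn fun y hy ↦ ?_) (by positivity)
    exact mul_le_mul_of_nonneg_right
      (Real.rpow_le_rpow (sub_nonneg.2 hrx₀) (norm_ge hy) hα) (by positivity)
  · intro x y hy
    simp [hv₀ y hy, hq.ne']

namespace IsNormalizedMinimizer

theorem rpow_mul_integral_le [Nontrivial V] (hu : IsNormalizedMinimizer α q u) (hα : 0 ≤ α)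
    (hq : 0 < q) (hr : 0 < r) (hr' : 2 * r ≤ 1) :
    ((1 - 2 * r) ^ α * r ^ Module.finrank ℝ V * ∫ x in ball (0 : V) 1, |u x| ^ q) ^ (2 / q)
      ≤ r ^ (Module.finrank ℝ V - 2 : ℝ) := by
  obtain ⟨x₁, hx₁⟩ := exists_norm_eq V (by linarith : 0 ≤ 1 - r)
  have fits : r + ‖x₁‖ ≤ 1 := by linarith
  have limit := (((tendsto_integral_truncatedExtension hu.dirichletC1 hq.le).const_mul
    ((1 - 2 * r) ^ α * r ^ Module.finrank ℝ V)).rpow_const (p := 2 / q) (Or.inr (by positivity)))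
  refine le_of_tendsto limit ?_
  filter_upwards [self_mem_nhdsWithin] with e he
  set v := truncatedExtension e u
  have smooth : ContDiff ℝ 1 v := contDiff_truncatedExtension hu.dirichletC1 he
  have supp : tsupport v ⊆ ball 0 1 := tsupport_truncatedExtension_subset hu.dirichletC1 he
  have v_eq_zero (y : V) (hy : y ∉ ball (0 : V) 1) : v y = 0 := indicator_of_notMem hy _
  have mass_ge := mul_integral_le_henonMass_rescale hα hq smooth.continuous v_eq_zero hr fits
    (by linarith)
  rw [hx₁, show 1 - r - r = 1 - 2 * r by ring] at mass_ge
  have : 0 ≤ 1 - 2 * r := by linarith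
  refine le_of_mul_le_mul_left ?_ (hu.dirichletEnergy_pos hq.ne')
  calc dirichletEnergy u * ((1 - 2 * r) ^ α * r ^ Module.finrank ℝ V
        * ∫ x in ball (0 : V) 1, |v x| ^ q) ^ (2 / q)
      ≤ dirichletEnergy u * henonMass α q (rescale x₁ r v) ^ (2 / q) := by
        have := dirichletEnergy_nonneg u
        have : 0 ≤ ∫ x in ball (0 : V) 1, |v x| ^ q := integral_nonneg fun _ ↦ by positivity
        gcongr
    _ ≤ dirichletEnergy (rescale x₁ r v) :=
        hu.minimal _ (dirichletC1_rescale smooth v_eq_zero hr fits)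
    _ = r ^ (Module.finrank ℝ V - 2 : ℝ) * dirichletEnergy v :=
        dirichletEnergy_rescale (smooth.differentiable one_ne_zero) supp hr fits
    _ ≤ r ^ (Module.finrank ℝ V - 2 : ℝ) * dirichletEnergy u := by
        gcongr
        exact dirichletEnergy_truncatedExtension_le hu.dirichletC1 he
    _ = dirichletEnergy u * r ^ (Module.finrank ℝ V - 2 : ℝ) := mul_comm _ _

theorem mul_integral_le_rpow [Nontrivial V] (hu : IsNormalizedMinimizer α q u) (hα : 0 ≤ α)
    (hq : 0 < q) (hr : 0 < r) (hr' : 2 * r ≤ 1) :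
    (1 - 2 * r) ^ α * ∫ x in ball (0 : V) 1, |u x| ^ q
      ≤ r ^ ((Module.finrank ℝ V - 2) * (q / 2) - Module.finrank ℝ V : ℝ) := by
  have : 0 ≤ 1 - 2 * r := by linarith
  have : 0 ≤ ∫ x in ball (0 : V) 1, |u x| ^ q :=
    integral_nonneg fun _ ↦ by positivity
  have root := Real.rpow_le_rpow (by positivity) (hu.rpow_mul_integral_le hα hq hr hr')
    (by positivity : 0 ≤ q / 2)
  rw [← Real.rpow_mul (by positivity), ← Real.rpow_mul hr.le,
    div_mul_div_cancel₀ hq.ne', div_self two_ne_zero, Real.rpow_one] at root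
  rw [Real.rpow_sub hr, Real.rpow_natCast, le_div_iff₀ (by positivity), mul_right_comm]
  exact root

end IsNormalizedMinimizer

end BoundaryCompetitor

section CriticalExponent

/-- The critical Sobolev exponent `2* = 2n / (n - 2)`; it is meaningful for `3 ≤ n`. -/
def criticalExponent (n : ℕ) : ℝ := 2 * n / (n - 2)

variable {n : ℕ} {q : ℝ}

theorem le_criticalExponent_iff (hn : 3 ≤ n) :
    q ≤ criticalExponent n ↔ n * (q - 2) ≤ 2 * q := by
  have : (3 : ℝ) ≤ n := mod_cast hn
  rw [criticalExponent, le_div_iff₀ (by linarith)]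
  constructor <;> intro h <;> linarith

theorem two_lt_criticalExponent (hn : 3 ≤ n) : 2 < criticalExponent n := by
  have : (3 : ℝ) ≤ n := mod_cast hn
  rw [criticalExponent, lt_div_iff₀ (by linarith)]
  linarith

theorem sub_two_mul_criticalExponent_half (hn : 3 ≤ n) :
    (n - 2) * (criticalExponent n / 2) = (n : ℝ) := by
  have : (3 : ℝ) ≤ n := mod_cast hn
  rw [criticalExponent, ← mul_div_assoc, mul_div_cancel₀ _ (by linarith),
    mul_div_cancel_left₀ _ two_ne_zero]

end CriticalExponent

section Concentration

variable {V : Type*} [NormedAddCommGroup V] [InnerProductSpace ℝ V] [FiniteDimensional ℝ V]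
  [MeasurableSpace V] [BorelSpace V] {α : ℝ}

theorem eventually_integral_abs_rpow_le (hα : 0 ≤ α) (hn : 3 ≤ Module.finrank ℝ V) {ε : ℝ}
    (hε : 0 < ε) :
    ∀ᶠ q in 𝓝[<] criticalExponent (Module.finrank ℝ V), ∀ u : V → ℝ,
      IsNormalizedMinimizer α q u → ∫ x in ball (0 : V) 1, |u x| ^ q ≤ 1 + ε := by
  have : Nontrivial V := Module.nontrivial_of_finrank_pos (R := ℝ) (by lia)
  have weight_near_boundary : ∀ᶠ r : ℝ in 𝓝[>] 0, 1 < (1 - 2 * r) ^ α * (1 + ε) := by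
    have cont : ContinuousAt (fun r : ℝ ↦ (1 - 2 * r) ^ α * (1 + ε)) 0 :=
      (ContinuousAt.rpow_const (by fun_prop) (Or.inr hα)).mul continuousAt_const
    exact (cont.eventually_const_lt (by simpa using hε)).filter_mono nhdsWithin_le_nhds
  obtain ⟨r, hr_weight, hr, hr_half⟩ :=
    (weight_near_boundary.and (Ioo_mem_nhdsGT (by norm_num : (0 : ℝ) < 1 / 2))).exists
  have weight_pos : 0 < (1 - 2 * r) ^ α := Real.rpow_pos_of_pos (by linarith) α
  have cont : ContinuousAt (fun q : ℝ ↦ r ^ ((Module.finrank ℝ V - 2) * (q / 2)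
      - Module.finrank ℝ V : ℝ)) (criticalExponent (Module.finrank ℝ V)) :=
    ContinuousAt.rpow continuousAt_const (by fun_prop) (Or.inl hr.ne')
  have scaling_lt := cont.eventually_lt_const (u := (1 - 2 * r) ^ α * (1 + ε)) (by
    beta_reduce
    rwa [sub_two_mul_criticalExponent_half hn, sub_self, Real.rpow_zero])
  filter_upwards [scaling_lt.filter_mono nhdsWithin_le_nhds,
    Ioo_mem_nhdsLT (two_lt_criticalExponent hn)] with q hq_scaling hq u hu
  refine le_of_mul_le_mul_left ?_ weight_pos
  exact (hu.mul_integral_le_rpow hα (by linarith [hq.1]) hr (by linarith)).trans hq_scaling.le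

theorem IsNormalizedMinimizer.one_sub_rpow_mul_integral_ball_le {q ρ : ℝ} {u : V → ℝ}
    (hu : IsNormalizedMinimizer α q u) (hα : 0 ≤ α) (hq : 0 ≤ q) (hρ : ρ ≤ 1) :
    (1 - ρ ^ α) * ∫ x in ball (0 : V) ρ, |u x| ^ q ≤ (∫ x in ball (0 : V) 1, |u x| ^ q) - 1 := by
  have int_mass := integrableOn_ball_of_continuousOn_closedBall (μ := volume)
    (hu.dirichletC1.continuousOn_abs_rpow hq)
  have int_weighted := integrableOn_ball_of_continuousOn_closedBall (μ := volume)
    (hu.dirichletC1.continuousOn_norm_rpow_mul hα hq)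
  have int_defect : IntegrableOn (fun x ↦ |u x| ^ q - ‖x‖ ^ α * |u x| ^ q) (ball (0 : V) 1) :=
    int_mass.sub int_weighted
  have subset : ball (0 : V) ρ ⊆ ball 0 1 := ball_subset_ball hρ
  calc (1 - ρ ^ α) * ∫ x in ball (0 : V) ρ, |u x| ^ q
      = ∫ x in ball (0 : V) ρ, (1 - ρ ^ α) * |u x| ^ q := (integral_const_mul _ _).symm
    _ ≤ ∫ x in ball (0 : V) ρ, (|u x| ^ q - ‖x‖ ^ α * |u x| ^ q) := by
        refine setIntegral_mono_on ((int_mass.mono_set subset).const_mul _)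
          (int_defect.mono_set subset) measurableSet_ball fun x hx ↦ ?_
        rw [sub_mul, one_mul]
        gcongr
        exact (mem_ball_zero_iff.1 hx).le
    _ ≤ ∫ x in ball (0 : V) 1, (|u x| ^ q - ‖x‖ ^ α * |u x| ^ q) := by
        refine setIntegral_mono_set int_defect ((ae_restrict_iff' measurableSet_ball).2
          (Eventually.of_forall fun x hx ↦ sub_nonneg.2 ?_)) (Eventually.of_forall subset)
        exact mul_le_of_le_one_left (by positivity)
          (Real.rpow_le_one (norm_nonneg x) (mem_ball_zero_iff.1 hx).le hα)
    _ = (∫ x in ball (0 : V) 1, |u x| ^ q) - henonMass α q u := integral_sub int_mass int_weighted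
    _ = (∫ x in ball (0 : V) 1, |u x| ^ q) - 1 := by rw [hu.henonMass_eq_one]

theorem eventually_integral_interior_ball_le (hα : 0 < α) (hn : 3 ≤ Module.finrank ℝ V) {ρ : ℝ}
    (hρ₀ : 0 ≤ ρ) (hρ₁ : ρ < 1) {ε : ℝ} (hε : 0 < ε) :
    ∀ᶠ q in 𝓝[<] criticalExponent (Module.finrank ℝ V), ∀ u : V → ℝ,
      IsNormalizedMinimizer α q u → ∫ x in ball (0 : V) ρ, |u x| ^ q ≤ ε := by
  have gap : 0 < 1 - ρ ^ α := sub_pos.2 (Real.rpow_lt_one hρ₀ hρ₁ hα)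
  filter_upwards [eventually_integral_abs_rpow_le hα.le hn (mul_pos gap hε),
    Ioo_mem_nhdsLT (two_lt_criticalExponent hn)] with q hq_mass hq u hu
  refine le_of_mul_le_mul_left ?_ gap
  linarith [hq_mass u hu,
    hu.one_sub_rpow_mul_integral_ball_le hα.le (by linarith [hq.1] : 0 ≤ q) hρ₁.le]

theorem exists_dirichletEnergy_le (V : Type*) [NormedAddCommGroup V] [InnerProductSpace ℝ V]
    [FiniteDimensional ℝ V] [MeasurableSpace V] [BorelSpace V] [Nontrivial V] (hα : 0 ≤ α) {T : ℝ}
    (hT : 0 < T) :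
    ∃ L, 0 < L ∧ ∀ q ∈ Icc 2 T, ∀ u : V → ℝ, IsNormalizedMinimizer α q u →
      dirichletEnergy u ≤ L := by
  set f : V → ℝ := fun x ↦ 1 - ‖x‖ ^ 2
  have admissible : DirichletC1 f :=
    ⟨(contDiff_const.sub (contDiff_norm_sq ℝ)).contDiffOn, fun x hx ↦ by simp [f, hx]⟩
  set m := min 1 (henonMass α T f)
  have m_pos : 0 < m :=
    lt_min one_pos (henonMass_pos hα hT admissible ⟨0, by simp, by simp [f]⟩)
  refine ⟨max 1 (dirichletEnergy f / m), by positivity, fun q hq u hu ↦ le_max_of_le_right ?_⟩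
  have q_pos : 0 < q := by linarith [hq.1]
  have m_le_mass : m ≤ henonMass α q f := (min_le_right _ _).trans <| by
    refine setIntegral_ball_mono_of_continuousOn (admissible.continuousOn_norm_rpow_mul hα hT.le)
      (admissible.continuousOn_norm_rpow_mul hα q_pos.le) fun x hx ↦ ?_
    have abs_f : |f x| = 1 - ‖x‖ ^ 2 := abs_of_pos (one_sub_sq_norm_pos hx)
    refine mul_le_mul_of_nonneg_left ?_ (by positivity)
    exact Real.rpow_le_rpow_of_exponent_ge (abs_f ▸ one_sub_sq_norm_pos hx)
      (abs_f ▸ sub_le_self 1 (by positivity)) hq.2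
  have m_le_rpow : m ≤ henonMass α q f ^ (2 / q) := calc
    m = m ^ (1 : ℝ) := (Real.rpow_one m).symm
    _ ≤ m ^ (2 / q) := Real.rpow_le_rpow_of_exponent_ge m_pos (min_le_left _ _)
        ((div_le_one q_pos).2 hq.1)
    _ ≤ henonMass α q f ^ (2 / q) := by gcongr
  rw [le_div_iff₀ m_pos]
  exact (mul_le_mul_of_nonneg_left m_le_rpow (dirichletEnergy_nonneg u)).trans
    (hu.minimal f admissible)

theorem exists_pos_forall_le_integral_ball (hα : 0 ≤ α) (hn : 3 ≤ Module.finrank ℝ V) {ρ σ : ℝ}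
    (hρσ : ρ < σ) (hσ : σ < 1) :
    ∃ c, 0 < c ∧ ∀ q ∈ Ioo 2 (criticalExponent (Module.finrank ℝ V)), ∀ u : V → ℝ,
      IsNormalizedMinimizer α q u → ∀ x₀, ‖x₀‖ ≤ ρ → (∀ x ∈ ball (0 : V) 1, |u x| ≤ |u x₀|) →
        c ≤ ∫ x in ball (0 : V) σ, |u x| ^ q := by
  have : Nontrivial V := Module.nontrivial_of_finrank_pos (R := ℝ) (by lia)
  set T := criticalExponent (Module.finrank ℝ V)
  obtain ⟨L, L_pos, energy_le⟩ := exists_dirichletEnergy_le V hα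
    (two_pos.trans (two_lt_criticalExponent hn))
  set β := min (σ - ρ) (√(4 / L))
  have hβ : 0 < β := lt_min (by linarith) (by positivity)
  have hβL : β ^ 2 * L ≤ 4 := by
    rw [← le_div_iff₀ L_pos]
    exact (Real.le_sqrt hβ.le (by positivity)).1 (min_le_right _ _)
  have : 0 < volume.real (ball (0 : V) 1) := measureReal_ball_pos volume 0 one_pos
  have := weightedVolume_pos V
  refine ⟨weightedVolume V / 2 ^ T * min 1 (volume.real (ball (0 : V) 1))⁻¹
    * β ^ Module.finrank ℝ V, by positivity, fun q hq u hu x₀ hx₀ hmax ↦ ?_⟩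
  have hβσ : β + ‖x₀‖ ≤ σ := by linarith [min_le_left (σ - ρ) (√(4 / L))]
  have hβu : β ^ 2 * dirichletEnergy u ≤ 4 :=
    (mul_le_mul_of_nonneg_left (energy_le q ⟨hq.1.le, hq.2.le⟩ u hu) (sq_nonneg β)).trans hβL
  calc weightedVolume V / 2 ^ T * min 1 (volume.real (ball (0 : V) 1))⁻¹ * β ^ Module.finrank ℝ V
      ≤ weightedVolume V / 2 ^ q * min 1 (volume.real (ball (0 : V) 1))⁻¹
          * β ^ Module.finrank ℝ V := by
        gcongr
        exacts [one_le_two, hq.2.le]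
    _ ≤ ∫ x in ball x₀ β, |u x| ^ q :=
        hu.mul_pow_le_integral_ball hα hq.1.le ((le_criticalExponent_iff hn).1 hq.2.le) hβ hβu
          (by linarith) hmax
    _ ≤ ∫ x in ball (0 : V) σ, |u x| ^ q :=
        setIntegral_mono_set ((integrableOn_ball_of_continuousOn_closedBall
            (hu.dirichletC1.continuousOn_abs_rpow (by linarith [hq.1]))).mono_set
            (ball_subset_ball hσ.le))
          (Eventually.of_forall fun x ↦ by positivity)
          (Eventually.of_forall (ball_subset_ball' (by rwa [dist_zero_right])))

theorem eventually_lt_norm_of_forall_abs_le (hα : 0 < α) (hn : 3 ≤ Module.finrank ℝ V) {ρ : ℝ}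
    (hρ : ρ < 1) :
    ∀ᶠ q in 𝓝[<] criticalExponent (Module.finrank ℝ V), ∀ u : V → ℝ,
      IsNormalizedMinimizer α q u → ∀ x₀, (∀ x ∈ ball (0 : V) 1, |u x| ≤ |u x₀|) →
        ρ < ‖x₀‖ := by
  obtain ⟨σ, hσ, hσ₁⟩ := exists_between (max_lt hρ one_pos)
  obtain ⟨hρσ, hσ₀⟩ := max_lt_iff.1 hσ
  obtain ⟨c, hc, le_mass⟩ := exists_pos_forall_le_integral_ball (V := V) hα.le hn hρσ hσ₁
  filter_upwards [eventually_integral_interior_ball_le hα hn hσ₀.le hσ₁ (half_pos hc),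
    Ioo_mem_nhdsLT (two_lt_criticalExponent hn)] with q mass_le hq u hu x₀ hmax
  by_contra! hx₀
  linarith [mass_le u hu, le_mass q hq u hu x₀ hx₀ hmax]

end Concentration

section StraussEstimate

variable {V : Type*} [NormedAddCommGroup V] [InnerProductSpace ℝ V] {u : V → ℝ} {e x : V} {s t : ℝ}

theorem mul_setIntegral_Ioo_le_integral_annulus [FiniteDimensional ℝ V] [Nontrivial V]
    [MeasurableSpace V] [BorelSpace V] (μ : Measure V) [μ.IsAddHaarMeasure] {g : ℝ → ℝ} {a b : ℝ}
    (hg : IntegrableOn g (Ioo a b)) (hg₀ : ∀ t ∈ Ioo a b, 0 ≤ g t) (ha : 0 ≤ a) :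
    Module.finrank ℝ V * μ.real (ball (0 : V) 1) * a ^ (Module.finrank ℝ V - 1)
        * ∫ t in Ioo a b, g t
      ≤ ∫ x, (Ioo a b).indicator g ‖x‖ ∂μ := by
  have weighted_integrable : IntegrableOn (fun t ↦ t ^ (Module.finrank ℝ V - 1) * g t) (Ioo a b) :=
    hg.continuousOn_mul_of_subset (by fun_prop) isCompact_Icc measurableSet_Ioo
      Ioo_subset_Icc_self
  have polar : ∫ x, (Ioo a b).indicator g ‖x‖ ∂μ = Module.finrank ℝ V * μ.real (ball (0 : V) 1)
      * ∫ t in Ioo a b, t ^ (Module.finrank ℝ V - 1) * g t := by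
    simp only [integral_fun_norm_addHaar μ ((Ioo a b).indicator g),
      ← indicator_smul_apply (Ioo a b) (fun t : ℝ ↦ t ^ (Module.finrank ℝ V - 1)) g]
    rw [setIntegral_indicator measurableSet_Ioo,
      inter_eq_self_of_subset_right (s := Ioi 0) fun t ht ↦ ha.trans_lt ht.1]
    simp only [nsmul_eq_mul, smul_eq_mul, mul_assoc]
  rw [polar, mul_assoc, ← integral_const_mul]
  refine mul_le_mul_of_nonneg_left (setIntegral_mono_on (hg.const_mul _) weighted_integrable
    measurableSet_Ioo fun t ht ↦ ?_) (by positivity)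
  exact mul_le_mul_of_nonneg_right (pow_le_pow_left₀ ha ht.1.le _) (hg₀ t ht)

theorem smul_mem_unitBall (he : ‖e‖ = 1) (ht : t ∈ Ioo 0 1) : t • e ∈ ball (0 : V) 1 := by
  rw [mem_ball_zero_iff, norm_smul, he, mul_one, Real.norm_of_nonneg ht.1.le]
  exact ht.2

namespace DirichletC1

theorem hasDerivAt_comp_smul [CompleteSpace V] (hu : DirichletC1 u) (he : ‖e‖ = 1)
    (ht : t ∈ Ioo 0 1) :
    HasDerivAt (fun s : ℝ ↦ u (s • e)) (inner ℝ (∇ u (t • e)) e) t := by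
  rw [inner_gradient_left]
  have line : HasDerivAt (fun s : ℝ ↦ s • e) e t := by
    simpa using (hasDerivAt_id t).smul_const e
  exact (hu.differentiableAt (smul_mem_unitBall he ht)).hasFDerivAt.comp_hasDerivAt t line

theorem abs_deriv_comp_smul_le [CompleteSpace V] (hu : DirichletC1 u)
    (hrad : ∀ x y, ‖x‖ = ‖y‖ → u x = u y) (he : ‖e‖ = 1) (hx : ‖x‖ ∈ Ioo 0 1) :
    |deriv (fun s : ℝ ↦ u (s • e)) ‖x‖| ≤ ‖∇ u x‖ := by
  have norm_direction : ‖‖x‖⁻¹ • x‖ = 1 := norm_smul_inv_norm (norm_pos_iff.1 hx.1)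
  have profile_eq : (fun s : ℝ ↦ u (s • e)) = fun s : ℝ ↦ u (s • ‖x‖⁻¹ • x) :=
    funext fun s ↦ hrad _ _ (by rw [norm_smul, norm_smul, he, norm_direction])
  rw [profile_eq, (hu.hasDerivAt_comp_smul norm_direction hx).deriv,
    smul_inv_smul₀ hx.1.ne']
  simpa [norm_direction] using abs_real_inner_le_norm (∇ u x) (‖x‖⁻¹ • x)

variable [FiniteDimensional ℝ V]

theorem integrableOn_sq_deriv_comp_smul (hu : DirichletC1 u) (he : ‖e‖ = 1) :
    IntegrableOn (fun t ↦ deriv (fun s : ℝ ↦ u (s • e)) t ^ 2) (Ioo 0 1) := by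
  obtain ⟨C, hC⟩ := hu.exists_norm_gradient_le
  refine IntegrableOn.of_bound (by simp) ((measurable_deriv _).pow_const 2).aestronglyMeasurable
    (C ^ 2) ((ae_restrict_iff' measurableSet_Ioo).2 (Eventually.of_forall fun t ht ↦ ?_))
  rw [(hu.hasDerivAt_comp_smul he ht).deriv, norm_pow]
  have inner_le := norm_inner_le_norm (𝕜 := ℝ) (∇ u (t • e)) e
  rw [he, mul_one] at inner_le
  exact pow_le_pow_left₀ (norm_nonneg _)
    (inner_le.trans (hC _ (smul_mem_unitBall he ht))) 2

theorem sq_apply_smul_le (hu : DirichletC1 u) (he : ‖e‖ = 1) (hs₀ : 0 < s) (hs₁ : s ≤ 1) :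
    u (s • e) ^ 2 ≤ (1 - s) * ∫ t in Ioo s 1, deriv (fun r : ℝ ↦ u (r • e)) t ^ 2 := by
  set φ := fun r : ℝ ↦ u (r • e)
  have sq_integrable : IntegrableOn (fun t ↦ deriv φ t ^ 2) (Ioo s 1) :=
    (hu.integrableOn_sq_deriv_comp_smul he).mono_set (Ioo_subset_Ioo_left hs₀.le)
  have integrable : IntegrableOn (deriv φ) (Ioo s 1) :=
    ((memLp_two_iff_integrable_sq (measurable_deriv φ).aestronglyMeasurable).2
      sq_integrable).integrable one_le_two
  have boundary : φ 1 = 0 := hu.eq_zero_of_norm_eq_one _ (by rw [one_smul, he])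
  have ftc : ∫ t in Ioo s 1, deriv φ t = -u (s • e) := by
    rw [← integral_Ioc_eq_integral_Ioo, ← intervalIntegral.integral_of_le hs₁,
      intervalIntegral.integral_eq_sub_of_hasDerivAt_of_le (f := φ) hs₁ ?_ (fun t ht ↦ ?_)
        ((intervalIntegrable_iff_integrableOn_Ioo_of_le hs₁).2 integrable), boundary, zero_sub]
    · refine hu.continuousOn.comp (by fun_prop) fun t ht ↦ ?_
      rw [mem_closedBall_zero_iff, norm_smul, he, mul_one, Real.norm_of_nonneg (hs₀.le.trans ht.1)]
      exact ht.2
    · exact (hu.hasDerivAt_comp_smul he ⟨hs₀.trans ht.1, ht.2⟩).differentiableAt.hasDerivAt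
  calc u (s • e) ^ 2 = (∫ t in Ioo s 1, deriv φ t) ^ 2 := by rw [ftc, neg_sq]
    _ ≤ (volume.restrict (Ioo s 1)).real univ * ∫ t in Ioo s 1, deriv φ t ^ 2 :=
        sq_integral_le_measureReal_mul_integral_sq integrable sq_integrable
    _ = (1 - s) * ∫ t in Ioo s 1, deriv φ t ^ 2 := by
        rw [measureReal_restrict_apply_univ, Real.volume_real_Ioo_of_le hs₁]

variable [MeasurableSpace V] [BorelSpace V]

theorem integral_annulus_sq_deriv_le (hu : DirichletC1 u) (hrad : ∀ x y, ‖x‖ = ‖y‖ → u x = u y)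
    (he : ‖e‖ = 1) (hs : 0 ≤ s) :
    ∫ x : V, (Ioo s 1).indicator (fun t ↦ deriv (fun r : ℝ ↦ u (r • e)) t ^ 2) ‖x‖
      ≤ dirichletEnergy u := by
  rw [dirichletEnergy, ← integral_indicator measurableSet_ball]
  refine integral_mono_of_nonneg
    (Eventually.of_forall fun x ↦ indicator_nonneg (fun t _ ↦ sq_nonneg _) _)
    ((integrable_indicator_iff measurableSet_ball).2 hu.integrableOn_sq_norm_gradient)
    (Eventually.of_forall fun x ↦ ?_)
  by_cases hx : ‖x‖ ∈ Ioo s 1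
  · simp only [indicator_of_mem hx, indicator_of_mem (mem_ball_zero_iff.2 hx.2)]
    exact sq_le_sq.2 ((hu.abs_deriv_comp_smul_le hrad he ⟨hs.trans_lt hx.1, hx.2⟩).trans_eq
      (abs_norm _).symm)
  · simp only [indicator_of_notMem hx]
    exact indicator_nonneg (fun x _ ↦ by positivity) x

theorem mul_sq_le_one_sub_norm_mul_dirichletEnergy (hu : DirichletC1 u)
    (hrad : ∀ x y, ‖x‖ = ‖y‖ → u x = u y) (hx₀ : x ≠ 0) (hx₁ : ‖x‖ ≤ 1) :
    Module.finrank ℝ V * volume.real (ball (0 : V) 1) * ‖x‖ ^ (Module.finrank ℝ V - 1) * u x ^ 2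
      ≤ (1 - ‖x‖) * dirichletEnergy u := by
  have : Nontrivial V := ⟨x, 0, hx₀⟩
  have norm_pos : 0 < ‖x‖ := norm_pos_iff.2 hx₀
  set e := ‖x‖⁻¹ • x
  have he : ‖e‖ = 1 := norm_smul_inv_norm hx₀
  set I := ∫ t in Ioo ‖x‖ 1, deriv (fun r : ℝ ↦ u (r • e)) t ^ 2
  have sq_le : u x ^ 2 ≤ (1 - ‖x‖) * I := by
    simpa only [e, smul_inv_smul₀ norm_pos.ne'] using hu.sq_apply_smul_le he norm_pos hx₁
  have energy_ge := (mul_setIntegral_Ioo_le_integral_annulus (volume : Measure V)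
    ((hu.integrableOn_sq_deriv_comp_smul he).mono_set (Ioo_subset_Ioo_left norm_pos.le))
    (fun t _ ↦ sq_nonneg _) norm_pos.le).trans
    (hu.integral_annulus_sq_deriv_le hrad he norm_pos.le)
  set c := Module.finrank ℝ V * volume.real (ball (0 : V) 1) * ‖x‖ ^ (Module.finrank ℝ V - 1)
  calc c * u x ^ 2 ≤ c * ((1 - ‖x‖) * I) := by gcongr
    _ = (1 - ‖x‖) * (c * I) := by ring
    _ ≤ (1 - ‖x‖) * dirichletEnergy u :=
        mul_le_mul_of_nonneg_left energy_ge (sub_nonneg.2 hx₁)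

end DirichletC1

end StraussEstimate

section NonRadiality

variable {V : Type*} [NormedAddCommGroup V] [InnerProductSpace ℝ V] [FiniteDimensional ℝ V]
  [MeasurableSpace V] [BorelSpace V] {α : ℝ}

theorem IsNormalizedMinimizer.min_one_inv_volume_le_sq {q : ℝ} {u : V → ℝ}
    (hu : IsNormalizedMinimizer α q u) (hα : 0 ≤ α) (hq : 2 ≤ q) {M : ℝ} (hM₀ : 0 ≤ M)
    (hM : ∀ x ∈ ball (0 : V) 1, |u x| ≤ M) : min 1 (volume.real (ball (0 : V) 1))⁻¹ ≤ M ^ 2 := by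
  rcases le_total 1 M with hM₁ | hM₁
  · exact (min_le_left _ _).trans (one_le_pow₀ hM₁)
  · refine (min_le_right _ _).trans ?_
    rw [inv_le_iff_one_le_mul₀' (measureReal_ball_pos volume 0 one_pos)]
    calc 1 ≤ volume.real (ball (0 : V) 1) * M ^ q := hu.one_le_volume_mul_rpow hα (by linarith) hM
      _ ≤ volume.real (ball (0 : V) 1) * M ^ (2 : ℝ) :=
          mul_le_mul_of_nonneg_left
            (Real.rpow_le_rpow_of_exponent_ge' hM₀ hM₁ zero_le_two hq) measureReal_nonneg
      _ = volume.real (ball (0 : V) 1) * M ^ 2 := by rw [Real.rpow_ofNat]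

theorem eventually_not_radial (hα : 0 < α) (hn : 3 ≤ Module.finrank ℝ V) :
    ∀ᶠ q in 𝓝[<] criticalExponent (Module.finrank ℝ V), ∀ u : V → ℝ,
      IsNormalizedMinimizer α q u → ¬ ∀ x y, ‖x‖ = ‖y‖ → u x = u y := by
  have : Nontrivial V := Module.nontrivial_of_finrank_pos (R := ℝ) (by lia)
  have hT := two_lt_criticalExponent hn
  obtain ⟨L, -, energy_le⟩ := exists_dirichletEnergy_le V hα.le (two_pos.trans hT)
  set ω := volume.real (ball (0 : V) 1)
  have ω_pos : 0 < ω := measureReal_ball_pos volume 0 one_pos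
  have strauss_small : ∀ᶠ t in 𝓝 (1 : ℝ),
      (1 - t) * L < Module.finrank ℝ V * ω * t ^ (Module.finrank ℝ V - 1) * min 1 ω⁻¹ := by
    refine ContinuousAt.eventually_lt (by fun_prop) (by fun_prop) ?_
    rw [sub_self, zero_mul, one_pow, mul_one]
    positivity
  obtain ⟨ρ, ⟨hρ₀, hρ₁⟩, near_sphere⟩ := exists_Ioc_subset_of_mem_nhds' strauss_small one_pos
  filter_upwards [eventually_lt_norm_of_forall_abs_le hα hn hρ₁, Ioo_mem_nhdsLT hT]
    with q lt_norm hq u hu hrad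
  obtain ⟨x₀, hx₀, hmax⟩ := (isCompact_closedBall (0 : V) 1).exists_isMaxOn
    ⟨0, by simp⟩ hu.dirichletC1.continuousOn.abs
  have hmax_ball (x : V) (hx : x ∈ ball (0 : V) 1) : |u x| ≤ |u x₀| :=
    hmax (ball_subset_closedBall hx)
  have hρx₀ := lt_norm u hu x₀ hmax_ball
  have x₀_pos : 0 < ‖x₀‖ := hρ₀.trans_lt hρx₀
  have norm_le : ‖x₀‖ ≤ 1 := mem_closedBall_zero_iff.1 hx₀
  have sq_ge : min 1 ω⁻¹ ≤ u x₀ ^ 2 :=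
    sq_abs (u x₀) ▸ hu.min_one_inv_volume_le_sq hα.le hq.1.le (abs_nonneg _) hmax_ball
  have strauss_lt : (1 - ‖x₀‖) * L
      < Module.finrank ℝ V * ω * ‖x₀‖ ^ (Module.finrank ℝ V - 1) * min 1 ω⁻¹ :=
    near_sphere ⟨hρx₀, norm_le⟩
  refine strauss_lt.not_ge ?_
  calc Module.finrank ℝ V * ω * ‖x₀‖ ^ (Module.finrank ℝ V - 1) * min 1 ω⁻¹
      ≤ Module.finrank ℝ V * ω * ‖x₀‖ ^ (Module.finrank ℝ V - 1) * u x₀ ^ 2 := by gcongr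
    _ ≤ (1 - ‖x₀‖) * dirichletEnergy u :=
        hu.dirichletC1.mul_sq_le_one_sub_norm_mul_dirichletEnergy hrad (norm_pos_iff.1 x₀_pos)
          norm_le
    _ ≤ (1 - ‖x₀‖) * L :=
        mul_le_mul_of_nonneg_left (energy_le q ⟨hq.1.le, hq.2.le⟩ u hu) (sub_nonneg.2 norm_le)

end NonRadiality

section GroundStates

variable {N : ℕ} {α p : ℝ} {u : E N → ℝ}

theorem ray_eq_div (α p : ℝ) (u : E N → ℝ) :
    ray α p u = dirichletEnergy u / henonMass α (p + 1) u ^ (2 / (p + 1)) := rfl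

theorem Sval_le_ray (hu : memC u) : Sval N α p ≤ ray α p u := by
  refine csInf_le ⟨0, ?_⟩ ⟨u, hu, rfl⟩
  rintro _ ⟨v, -, rfl⟩
  exact div_nonneg (dirichletEnergy_nonneg v) (Real.rpow_nonneg (henonMass_nonneg α (p + 1) v) _)

theorem Sval_mul_henonMass_rpow_le [Nontrivial (E N)] (hα : 0 ≤ α) (hp : 0 < p + 1)
    (hu : DirichletC1 u) :
    Sval N α p * henonMass α (p + 1) u ^ (2 / (p + 1)) ≤ dirichletEnergy u := by
  by_cases h : ∃ x ∈ closedBall (0 : E N) 1, u x ≠ 0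
  · rw [← le_div_iff₀ (Real.rpow_pos_of_pos (henonMass_pos hα hp hu h) _), ← ray_eq_div]
    exact Sval_le_ray ⟨hu.contDiffOn, hu.eq_zero_of_norm_eq_one, h⟩
  · push Not at h
    rw [henonMass_eq_zero hp.ne' fun x hx ↦ h x (ball_subset_closedBall hx),
      Real.zero_rpow (by positivity), mul_zero]
    exact dirichletEnergy_nonneg u

theorem exists_isNormalizedMinimizer_const_mul [Nontrivial (E N)] (hα : 0 ≤ α) (hp : 0 < p + 1)
    (hu : memC u) (hmin : ray α p u = Sval N α p) :
    ∃ d, 0 < d ∧ IsNormalizedMinimizer α (p + 1) (fun x ↦ d * u x) := by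
  have admissible : DirichletC1 u := ⟨hu.1, hu.2.1⟩
  have mass_pos := henonMass_pos hα hp admissible hu.2.2
  set d := henonMass α (p + 1) u ^ (-(p + 1)⁻¹)
  have d_pos : 0 < d := Real.rpow_pos_of_pos mass_pos _
  have d_sq : d ^ 2 = (henonMass α (p + 1) u ^ (2 / (p + 1)))⁻¹ := by
    rw [← Real.rpow_mul_natCast mass_pos.le, ← Real.rpow_neg mass_pos.le]
    congr 1
    push_cast
    ring
  have energy_eq : dirichletEnergy (fun x ↦ d * u x) = Sval N α p := by
    rw [dirichletEnergy_const_mul admissible, ← hmin, ray_eq_div, d_sq, inv_mul_eq_div]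
  refine ⟨d, d_pos, admissible.const_mul d, ?_, fun w hw ↦ ?_⟩
  · rw [henonMass_const_mul, abs_of_pos d_pos, ← Real.rpow_mul mass_pos.le, neg_mul,
      inv_mul_cancel₀ hp.ne', Real.rpow_neg_one, inv_mul_cancel₀ mass_pos.ne']
  · rw [energy_eq]
    exact Sval_mul_henonMass_rpow_le hα hp hw

theorem exists_forall_ray_eq_Sval_of_eventually (hN : 3 ≤ N) (hα : 0 ≤ α) {P : (E N → ℝ) → Prop}
    (hP : ∀ᶠ q in 𝓝[<] criticalExponent N, ∀ u, IsNormalizedMinimizer α q u → P u)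
    (hP_mul : ∀ d u, 0 < d → P (fun x ↦ d * u x) → P u) :
    ∃ δ, 0 < δ ∧ ∀ p, criticalExponent N - δ < p + 1 → p + 1 < criticalExponent N →
      ∀ u : E N → ℝ, memC u → ray α p u = Sval N α p → P u := by
  have : Nontrivial (E N) := Module.nontrivial_of_finrank_pos (R := ℝ)
    (by rw [finrank_euclideanSpace_fin]; lia)
  obtain ⟨l, hl, h⟩ := (mem_nhdsLT_iff_exists_Ioo_subset' (sub_one_lt _)).1
    (hP.and (Ioo_mem_nhdsLT (two_lt_criticalExponent hN)))
  refine ⟨criticalExponent N - l, sub_pos.2 hl, fun p hp hp' u hu hmin ↦ ?_⟩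
  obtain ⟨P_of_min, hp_two, -⟩ := h ⟨by linarith, hp'⟩
  obtain ⟨d, d_pos, normalized⟩ := exists_isNormalizedMinimizer_const_mul hα (by linarith) hu hmin
  exact hP_mul d u d_pos (P_of_min _ normalized)

end GroundStates

/-- Cao–Peng boundary concentration: for fixed α > 0, as p+1 → 2* every maximum point of
a ground state of R_{α,p} approaches the boundary; in particular ground states are
non-radial for p+1 close to 2*. -/
theorem stmt9 {N : ℕ} (hN : 3 ≤ N) (α : ℝ) (hα : 0 < α) :
    (∀ η : ℝ, 0 < η → ∃ δ : ℝ, 0 < δ ∧ ∀ p : ℝ,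
      2 * (N : ℝ) / ((N : ℝ) - 2) - δ < p + 1 → p + 1 < 2 * (N : ℝ) / ((N : ℝ) - 2) →
      ∀ u : E N → ℝ, memC u → ray α p u = Sval N α p →
      ∀ x₀ ∈ closedBall (0 : E N) 1,
        (∀ x ∈ closedBall (0 : E N) 1, |u x| ≤ |u x₀|) →
        Metric.infDist x₀ (sphere (0 : E N) 1) < η) ∧
    ∃ δ₀ : ℝ, 0 < δ₀ ∧ ∀ p : ℝ,
      2 * (N : ℝ) / ((N : ℝ) - 2) - δ₀ < p + 1 → p + 1 < 2 * (N : ℝ) / ((N : ℝ) - 2) →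
      ∀ u : E N → ℝ, memC u → ray α p u = Sval N α p → ¬ radial u := by
  have finrank_eq : Module.finrank ℝ (E N) = N := finrank_euclideanSpace_fin
  have hn : 3 ≤ Module.finrank ℝ (E N) := hN.trans_eq finrank_eq.symm
  have : Nontrivial (E N) := Module.nontrivial_of_finrank_pos (R := ℝ) (three_pos.trans_le hn)
  constructor
  · intro η hη
    have near_sphere := eventually_lt_norm_of_forall_abs_le hα hn (sub_lt_self 1 hη)
    rw [finrank_eq] at near_sphere
    refine exists_forall_ray_eq_Sval_of_eventually hN hα.le ?_ fun d u _ h x₀ hx₀ hmax ↦ ?_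
    · filter_upwards [near_sphere] with q hq u hu x₀ hx₀ hmax
      have := hq u hu x₀ fun x hx ↦ hmax x (ball_subset_closedBall hx)
      linarith [infDist_sphere_le (mem_closedBall_zero_iff.1 hx₀)]
    · refine h x₀ hx₀ fun x hx ↦ ?_
      simpa only [abs_mul] using mul_le_mul_of_nonneg_left (hmax x hx) (abs_nonneg d)
  · have not_radial := eventually_not_radial hα hn
    rw [finrank_eq] at not_radial
    exact exists_forall_ray_eq_Sval_of_eventually hN hα.le not_radial fun d u _ h hrad ↦
      h fun x y hxy ↦ congrArg (d * ·) (hrad x y hxy)
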